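/- arXiv:0803.4392 — 3 statements merged into one kernel-verified Lean document; each statement's English description precedes it below -/
import Mathlib

section
/- Let E = {p_1⋯p_{j−1} p̌_j p_{j+1}⋯p_k : k ≥ 2, 1 ≤ j ≤ k} and Φ(x) = x ln(1+x)/ln ln(3+x). Then for every f ∈ L^Φ(𝕋), lim_{n→∞, n∈E} R_n f(x) = ∫_0^1 f(t) dt for almost every x ∈ 𝕋. -/
open MeasureTheory Filter Set

/-- The circle `𝕋 = ℝ/ℤ` with its Lebesgue (Haar) probability measure. -/
abbrev Circle1 := AddCircle (1 : ℝ)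

/-- The Riemann sum operator `R_n f(x) = (1/n) ∑_{k=0}^{n-1} f(x + k/n)`. -/
noncomputable def RiemannSum (n : ℕ) (f : Circle1 → ℝ) (x : Circle1) : ℝ :=
  (n : ℝ)⁻¹ * ∑ k ∈ Finset.range n, f (x + (((k : ℝ) / (n : ℝ) : ℝ) : Circle1))

/-- `nthPrime k` is the `(k+1)`-st prime: `nthPrime 0 = 2 = p_1`, … -/
noncomputable def nthPrime (k : ℕ) : ℕ := Nat.nth Nat.Prime k

/-- The set `E = {p_1 ⋯ p_{j-1} p̌_j p_{j+1} ⋯ p_k : k ≥ 2, 1 ≤ j ≤ k}`. -/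
noncomputable def Eset : Set ℕ :=
  {m | ∃ k : ℕ, 2 ≤ k ∧ ∃ j < k, m = ∏ i ∈ Finset.range k \ {j}, nthPrime i}

/-- `Φ(x) = x ln(1+x) / ln ln(3+x)`. -/
noncomputable def PhiE (x : ℝ) : ℝ := x * Real.log (1 + x) / Real.log (Real.log (3 + x))


open scoped ENNReal Nat

/-- ENNReal-valued Riemann sums. -/
noncomputable def RS (n : ℕ) (g : Circle1 → ℝ≥0∞) (x : Circle1) : ℝ≥0∞ :=
  (n : ℝ≥0∞)⁻¹ * ∑ k ∈ Finset.range n, g (x + (((k : ℝ) / (n : ℝ) : ℝ) : Circle1))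

/-- The group of periods. -/
def per {α : Type} (g : Circle1 → α) : AddSubgroup Circle1 where
  carrier := {c | ∀ x, g (x + c) = g x}
  zero_mem' := by intro x; simp
  add_mem' := by
    intro a b ha hb x
    rw [← add_assoc, hb, ha]
  neg_mem' := by
    intro a ha x
    have := ha (x + -a)
    simpa using this.symm

def PInv {α : Type} (n : ℕ) (g : Circle1 → α) : Prop := (((1 : ℝ) / (n : ℝ) : ℝ) : Circle1) ∈ per g

lemma PInv.mem {α : Type} {n : ℕ} {g : Circle1 → α} (h : PInv n g) (k : ℤ) :
    (((k : ℝ) / (n : ℝ) : ℝ) : Circle1) ∈ per g := by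
  have := (per g).zsmul_mem h k
  rw [← AddCircle.coe_zsmul] at this
  convert this using 2
  simp [div_eq_mul_inv]

lemma PInv.eq {α : Type} {n : ℕ} {g : Circle1 → α} (h : PInv n g) (k : ℕ) (x : Circle1) :
    g (x + (((k : ℝ) / (n : ℝ) : ℝ) : Circle1)) = g x := by
  have := h.mem (k : ℤ) x
  simpa using this

lemma PInv.of_dvd {α : Type} {m n : ℕ} {g : Circle1 → α} (hn : 0 < n) (h : PInv n g) (hd : m ∣ n) :
    PInv m g := by
  obtain ⟨c, rfl⟩ := hd
  have := h.mem (c : ℤ)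
  unfold PInv
  convert this using 2
  have : (m : ℝ) ≠ 0 := by rintro h; simp_all
  have : (c : ℝ) ≠ 0 := by rintro h; simp_all
  push_cast
  field_simp

lemma PInv.mul {α : Type} {a p : ℕ} {g : Circle1 → α} (ha : 0 < a) (hp : 0 < p)
    (hc : Nat.Coprime a p) (h1 : PInv a g) (h2 : PInv p g) : PInv (a * p) g := by
  have hb := Nat.gcd_eq_gcd_ab a p
  rw [hc.gcd_eq_one] at hb
  have := (per g).add_mem (h1.mem (Nat.gcdB a p)) (h2.mem (Nat.gcdA a p))
  unfold PInv
  rw [← AddCircle.coe_add] at this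
  convert this using 2
  have ha' : (a : ℝ) ≠ 0 := by positivity
  have hp' : (p : ℝ) ≠ 0 := by positivity
  have hb' : (1 : ℝ) = a * (Nat.gcdA a p : ℝ) + p * (Nat.gcdB a p : ℝ) := by exact_mod_cast hb
  push_cast
  field_simp
  linarith

lemma PInv.comp {α β : Type} {n : ℕ} {g : Circle1 → α} (h : PInv n g) (F : α → β) :
    PInv n (fun x => F (g x)) := fun x => congrArg F (h x)

lemma RS_inv {n : ℕ} (hn : 0 < n) (g : Circle1 → ℝ≥0∞) : PInv n (RS n g) := by
  intro x
  unfold RS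
  congr 1
  have h0 : (n : ℝ) ≠ 0 := by positivity
  have e : ∀ k : ℕ, g (x + (((1 : ℝ) / (n : ℝ) : ℝ) : Circle1) + (((k : ℝ) / (n : ℝ) : ℝ) : Circle1))
      = g (x + ((((k + 1 : ℕ) : ℝ) / (n : ℝ) : ℝ) : Circle1)) := by
    intro k
    rw [add_assoc, ← AddCircle.coe_add]
    congr 3
    push_cast
    ring
  simp_rw [e]
  have h1 := Finset.sum_range_succ (fun k : ℕ => g (x + (((k : ℝ) / (n : ℝ) : ℝ) : Circle1))) n
  have h2 := Finset.sum_range_succ' (fun k : ℕ => g (x + (((k : ℝ) / (n : ℝ) : ℝ) : Circle1))) n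
  obtain ⟨m, rfl⟩ : ∃ m, n = m + 1 := ⟨n - 1, by omega⟩
  rw [Finset.sum_range_succ, Finset.sum_range_succ' (n := m)
    (f := fun k : ℕ => g (x + (((k : ℝ) / ((m + 1 : ℕ) : ℝ) : ℝ) : Circle1)))]
  congr 1
  rw [div_self h0]
  have : ((1 : ℝ) : Circle1) = 0 := AddCircle.coe_period 1
  rw [this]
  simp

lemma RS_pull {n : ℕ} {g : Circle1 → ℝ≥0∞} (hg : PInv n g) (h : Circle1 → ℝ≥0∞) (x : Circle1) :
    RS n (fun x => g x * h x) x = g x * RS n h x := by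
  unfold RS
  simp_rw [hg.eq]
  rw [← Finset.mul_sum]
  ring

lemma RS_const {n : ℕ} (hn : 0 < n) (s : ℝ≥0∞) (x : Circle1) : RS n (fun _ => s) x = s := by
  unfold RS
  simp only [Finset.sum_const, Finset.card_range, nsmul_eq_mul]
  rw [← mul_assoc, ENNReal.inv_mul_cancel (by positivity) (by simp), one_mul]

lemma RS_of_inv {n : ℕ} (hn : 0 < n) {g : Circle1 → ℝ≥0∞} (hg : PInv n g) : RS n g = g := by
  funext x
  have := RS_pull hg (fun _ => 1) x
  simpa [RS_const hn] using this

lemma RS_mono {n : ℕ} {g h : Circle1 → ℝ≥0∞} (hgh : ∀ x, g x ≤ h x) (x : Circle1) :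
    RS n g x ≤ RS n h x := by
  unfold RS
  gcongr
  exact hgh _

lemma RS_add {n : ℕ} (g h : Circle1 → ℝ≥0∞) (x : Circle1) :
    RS n (fun x => g x + h x) x = RS n g x + RS n h x := by
  unfold RS
  rw [Finset.sum_add_distrib, mul_add]

lemma RS_mul {n : ℕ} (c : ℝ≥0∞) (h : Circle1 → ℝ≥0∞) (x : Circle1) :
    RS n (fun x => c * h x) x = c * RS n h x := by
  unfold RS
  rw [← Finset.mul_sum]
  ring

lemma RS_comm (m n : ℕ) (g : Circle1 → ℝ≥0∞) : RS n (RS m g) = RS m (RS n g) := by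
  funext x
  unfold RS
  simp_rw [← Finset.mul_sum]
  rw [Finset.sum_comm]
  simp_rw [add_right_comm x]
  ring

lemma RS_tower {m n : ℕ} (hn : 0 < n) (hd : m ∣ n) (g : Circle1 → ℝ≥0∞) :
    RS n (RS m g) = RS n g := by
  rw [RS_comm]
  exact RS_of_inv (Nat.pos_of_dvd_of_pos hd hn) ((RS_inv hn g).of_dvd hn hd)

lemma RS_coprime {a p : ℕ} (ha : 0 < a) (hp : 0 < p) (hc : Nat.Coprime a p)
    {g : Circle1 → ℝ≥0∞} (hg : PInv p g) : RS a g = RS (a * p) g := by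
  have h1 : PInv p (RS a g) := by
    rw [← RS_of_inv hp hg, RS_comm]
    exact RS_inv hp _
  have h2 := PInv.mul ha hp hc (RS_inv ha g) h1
  rw [← RS_of_inv (Nat.mul_pos ha hp) h2, RS_tower (Nat.mul_pos ha hp) (dvd_mul_right a p)]

lemma RS_meas {n : ℕ} {g : Circle1 → ℝ≥0∞} (hg : Measurable g) : Measurable (RS n g) := by
  unfold RS
  refine Measurable.const_mul ?_ _
  exact Finset.measurable_sum _ (fun k _ => hg.comp (measurable_add_const _))

lemma RS_lintegral {n : ℕ} (hn : 0 < n) {g : Circle1 → ℝ≥0∞} (hg : Measurable g) :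
    ∫⁻ x, RS n g x = ∫⁻ x, g x := by
  have hm : ∀ k ∈ Finset.range n, Measurable
      (fun x : Circle1 => g (x + (((k : ℝ) / (n : ℝ) : ℝ) : Circle1))) :=
    fun k _ => hg.comp (measurable_add_const _)
  unfold RS
  rw [lintegral_const_mul _ (Finset.measurable_fun_sum _ hm),
    lintegral_finsetSum _ hm]
  simp_rw [lintegral_add_right_eq_self (fun x => g x)]
  simp only [Finset.sum_const, Finset.card_range, nsmul_eq_mul]
  rw [← mul_assoc, ENNReal.inv_mul_cancel (by positivity) (by simp), one_mul]

lemma RS_jensen {n : ℕ} (hn : 0 < n) (g : Circle1 → ℝ≥0∞) (s : ℝ≥0∞) (x : Circle1) :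
    RS n g x - s ≤ RS n (fun x => g x - s) x := by
  rw [tsub_le_iff_right]
  calc RS n g x ≤ RS n (fun x => (g x - s) + s) x := RS_mono (fun x => le_tsub_add) x
    _ = _ := by rw [RS_add, RS_const hn]

lemma maximal_fin {N : ℕ → ℕ} (hpos : ∀ k, 0 < N k) (hd : ∀ k l, k ≤ l → N k ∣ N l) (K : ℕ) :
    ∀ g : Circle1 → ℝ≥0∞, Measurable g →
      volume {x | ∃ k < K, 1 < RS (N k) g x} ≤ ∫⁻ x, g x := by
  induction K with
  | zero => intro g hg; simp
  | succ K ih =>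
    intro g hg
    set B : Set Circle1 := {x | 1 < RS (N K) g x} with hB
    have hBm : MeasurableSet B := measurableSet_lt measurable_const (RS_meas hg)
    set χ : Circle1 → ℝ≥0∞ := fun x => Bᶜ.indicator (fun _ => 1) x with hχ
    set χ' : Circle1 → ℝ≥0∞ := fun x => B.indicator (fun _ => 1) x with hχ'
    have hχm : Measurable χ := measurable_const.indicator hBm.compl
    have hχm' : Measurable χ' := measurable_const.indicator hBm
    have hinv : ∀ k ≤ K, PInv (N k) χ := by
      intro k hk
      refine PInv.of_dvd (hpos K) ?_ (hd k K hk)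
      intro x
      simp only [hχ, Set.indicator_apply, hB, mem_compl_iff, mem_ofPred_eq]
      rw [RS_inv (hpos K) g x]
    have hinv' : PInv (N K) χ' := by
      intro x
      have := RS_inv (hpos K) g x
      simp only [hχ', Set.indicator_apply, hB, mem_ofPred_eq, this]
    have hmg : Measurable (fun x => χ' x * g x) := hχm'.mul hg
    have h1 := ih (fun x => χ x * g x) (hχm.mul hg)
    have h2 : volume B ≤ ∫⁻ x, χ' x * g x := by
      rw [← RS_lintegral (hpos K) hmg]
      calc volume B = ∫⁻ x, χ' x := by
            simp only [hχ']
            rw [lintegral_indicator hBm]; simp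
        _ ≤ _ := by
            apply lintegral_mono
            intro x
            show χ' x ≤ RS (N K) (fun x => χ' x * g x) x
            rw [RS_pull hinv']
            by_cases hx : x ∈ B
            · have : 1 < RS (N K) g x := hx
              simp [hχ', hx, this.le]
            · simp [hχ', hx]
    have hsub : {x | ∃ k < K + 1, 1 < RS (N k) g x} ⊆
        B ∪ {x | ∃ k < K, 1 < RS (N k) (fun x => χ x * g x) x} := by
      rintro x ⟨k, hk, hx⟩
      by_cases hxB : x ∈ B
      · exact Or.inl hxB
      · right
        have hk' : k < K := by
          rcases Nat.lt_succ_iff_lt_or_eq.1 hk with h | h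
          · exact h
          · subst h; exact absurd hx hxB
        refine ⟨k, hk', ?_⟩
        rw [RS_pull (hinv k hk'.le)]
        simpa [hχ, hxB] using hx
    calc _ ≤ volume B + volume {x | ∃ k < K, 1 < RS (N k) (fun x => χ x * g x) x} :=
          (measure_mono hsub).trans (measure_union_le _ _)
      _ ≤ (∫⁻ x, χ' x * g x) + ∫⁻ x, χ x * g x := add_le_add h2 h1
      _ = ∫⁻ x, g x := by
          rw [← lintegral_add_left hmg]
          congr 1
          funext x
          by_cases hx : x ∈ B <;> simp [hχ, hχ', hx]

lemma maximal {N : ℕ → ℕ} (hpos : ∀ k, 0 < N k) (hd : ∀ k l, k ≤ l → N k ∣ N l)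
    {g : Circle1 → ℝ≥0∞} (hg : Measurable g) :
      volume {x | ∃ k, 1 < RS (N k) g x} ≤ ∫⁻ x, g x := by
  have : {x | ∃ k, 1 < RS (N k) g x} = ⋃ K, {x | ∃ k < K, 1 < RS (N k) g x} := by
    ext x
    simp only [mem_ofPred_eq, mem_iUnion]
    constructor
    · rintro ⟨k, hk⟩; exact ⟨k + 1, k, by omega, hk⟩
    · rintro ⟨K, k, _, hk⟩; exact ⟨k, hk⟩
  rw [this, Monotone.measure_iUnion]
  · exact iSup_le (fun K => maximal_fin hpos hd K g hg)
  · rintro a b hab x ⟨k, hk, hx⟩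
    exact ⟨k, by omega, hx⟩

/-- The Orlicz-type function `Ψ(t) = ∑ (t - i!/2)_+`. -/
noncomputable def Psi (t : ℝ≥0∞) : ℝ≥0∞ := ∑' i : ℕ, (t - ((i ! : ℕ) : ℝ≥0∞) / 2)

lemma Psi_mono {s t : ℝ≥0∞} (h : s ≤ t) : Psi s ≤ Psi t :=
  ENNReal.tsum_le_tsum (fun _ => tsub_le_tsub_right h _)

lemma Psi_meas : Measurable Psi := by
  unfold Psi
  exact Measurable.tsum (fun i => measurable_id.sub measurable_const)

lemma RS_tsum {n : ℕ} (w : ℕ → Circle1 → ℝ≥0∞) (x : Circle1) :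
    RS n (fun x => ∑' i, w i x) x = ∑' i, RS n (w i) x := by
  unfold RS
  rw [ENNReal.tsum_mul_left, Summable.tsum_finsetSum (fun _ _ => ENNReal.summable)]

lemma RS_Psi {n : ℕ} (hn : 0 < n) (g : Circle1 → ℝ≥0∞) (x : Circle1) :
    Psi (RS n g x) ≤ RS n (fun x => Psi (g x)) x := by
  unfold Psi
  rw [RS_tsum]
  exact ENNReal.tsum_le_tsum (fun i => RS_jensen hn g _ x)

/-- primorials -/
noncomputable def PP (k : ℕ) : ℕ := ∏ i ∈ Finset.range k, nthPrime i

lemma nthPrime_prime (k : ℕ) : (nthPrime k).Prime := Nat.prime_nth_prime k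

lemma PP_pos (k : ℕ) : 0 < PP k := Finset.prod_pos (fun i _ => (nthPrime_prime i).pos)

lemma PP_dvd {k l : ℕ} (h : k ≤ l) : PP k ∣ PP l :=
  Finset.prod_dvd_prod_of_subset _ _ _ (Finset.range_mono h)

/-- omitted products -/
noncomputable def QQ (j k : ℕ) : ℕ := ∏ i ∈ Finset.range k \ {j}, nthPrime i

lemma QQ_pos (j k : ℕ) : 0 < QQ j k := Finset.prod_pos (fun i _ => (nthPrime_prime i).pos)

lemma QQ_dvd {j k l : ℕ} (h : k ≤ l) : QQ j k ∣ QQ j l :=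
  Finset.prod_dvd_prod_of_subset _ _ _ (Finset.sdiff_subset_sdiff (Finset.range_mono h) le_rfl)

lemma QQ_mul {j k : ℕ} (h : j < k) : QQ j k * nthPrime j = PP k := by
  unfold QQ PP
  rw [Finset.sdiff_singleton_eq_erase]
  exact Finset.prod_erase_mul _ _ (Finset.mem_range.2 h)

lemma PP_dvd_QQ {j k : ℕ} (h : j < k) : PP j ∣ QQ j k := by
  apply Finset.prod_dvd_prod_of_subset
  intro i hi
  simp only [Finset.mem_range, Finset.mem_sdiff, Finset.mem_singleton] at *
  omega

lemma QQ_coprime (j k : ℕ) : Nat.Coprime (QQ j k) (nthPrime j) := by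
  unfold QQ
  apply Nat.Coprime.prod_left
  intro i hi
  rw [Nat.coprime_primes (nthPrime_prime i) (nthPrime_prime j)]
  intro h
  have := Nat.nth_injective Nat.infinite_setOfPred_prime h
  simp at hi
  omega

lemma RS_QQ {j k : ℕ} (h : j < k) (g : Circle1 → ℝ≥0∞) :
    RS (QQ j k) (RS (PP (j + 1)) g) = RS (PP k) g := by
  have hd : nthPrime j ∣ PP (j + 1) := ⟨QQ j (j + 1), by rw [mul_comm, QQ_mul (Nat.lt_succ_self j)]⟩
  rw [RS_coprime (QQ_pos j k) (nthPrime_prime j).pos (QQ_coprime j k)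
    ((RS_inv (PP_pos _) g).of_dvd (PP_pos _) hd), QQ_mul h, RS_tower (PP_pos k) (PP_dvd h)]

/-- jump part at level a -/
noncomputable def jmp (a : ℝ≥0∞) (u v : ℝ≥0∞) : ℝ≥0∞ := if v < a ∧ 2 * a ≤ u then u else 0

noncomputable def bb (u v : ℝ≥0∞) : ℝ≥0∞ := ∑' i : ℕ, jmp ((i ! : ℕ) : ℝ≥0∞) u v

lemma Psi_fact (i : ℕ) {v : ℝ≥0∞} (hv : ((i ! : ℕ) : ℝ≥0∞) ≤ v) :
    (((i + 1) ! : ℕ) : ℝ≥0∞) ≤ 2 * Psi v := by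
  have h1 : ∑ l ∈ Finset.range (i + 1), (v - ((l ! : ℕ) : ℝ≥0∞) / 2) ≤ Psi v :=
    ENNReal.sum_le_tsum _
  have h2 : ∀ l ∈ Finset.range (i + 1), ((i ! : ℕ) : ℝ≥0∞) / 2 ≤ v - ((l ! : ℕ) : ℝ≥0∞) / 2 := by
    intro l hl
    have hl' : l ≤ i := by simp at hl; omega
    have h3 : ((l ! : ℕ) : ℝ≥0∞) ≤ ((i ! : ℕ) : ℝ≥0∞) := by exact_mod_cast Nat.factorial_le hl'
    apply ENNReal.le_sub_of_add_le_right
    · exact (ENNReal.div_lt_top (by simp) (by simp)).ne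
    · calc _ ≤ ((i ! : ℕ) : ℝ≥0∞) / 2 + ((i ! : ℕ) : ℝ≥0∞) / 2 := by gcongr
        _ = ((i ! : ℕ) : ℝ≥0∞) := ENNReal.add_halves _
        _ ≤ v := hv
  have h4 := (Finset.sum_le_sum h2).trans h1
  simp only [Finset.sum_const, Finset.card_range, nsmul_eq_mul] at h4
  calc (((i + 1) ! : ℕ) : ℝ≥0∞) = ((i + 1 : ℕ) : ℝ≥0∞) * ((i ! : ℕ) : ℝ≥0∞) := by
        rw [Nat.factorial_succ]; push_cast; rfl
    _ = 2 * (((i + 1 : ℕ) : ℝ≥0∞) * (((i ! : ℕ) : ℝ≥0∞) / 2)) := by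
        rw [mul_left_comm, ENNReal.mul_div_cancel (by simp) (by simp)]
    _ ≤ _ := by gcongr

lemma pointwise (u v : ℝ≥0∞) : u ≤ 2 + 4 * Psi v + bb u v := by
  rcases eq_or_ne v ⊤ with hv | hv
  · have := Psi_fact 0 (v := ⊤) le_top
    have h : Psi v = ⊤ := by
      subst hv
      unfold Psi
      refine top_unique (le_trans ?_ (ENNReal.le_tsum 0))
      rw [ENNReal.top_sub]
      exact (ENNReal.div_lt_top (by simp) (by simp)).ne
    rw [h]; simp
  · have hex : ∃ i : ℕ, v < ((i ! : ℕ) : ℝ≥0∞) := by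
      obtain ⟨n, hn⟩ := ENNReal.exists_nat_gt hv
      exact ⟨n, hn.trans_le (by exact_mod_cast Nat.self_le_factorial n)⟩
    classical
    have hs := Nat.find_spec hex
    have hm := fun k => Nat.find_min (H := hex) (m := k)
    set i := Nat.find hex
    by_cases hu : 2 * ((i ! : ℕ) : ℝ≥0∞) ≤ u
    · calc u = jmp ((i ! : ℕ) : ℝ≥0∞) u v := by rw [jmp, if_pos ⟨hs, hu⟩]
        _ ≤ bb u v := ENNReal.le_tsum (f := fun i : ℕ => jmp ((i ! : ℕ) : ℝ≥0∞) u v) i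
        _ ≤ _ := le_add_self
    · push Not at hu
      refine hu.le.trans (le_trans ?_ le_self_add)
      rcases Nat.eq_zero_or_pos i with h0 | h0
      · rw [h0]; simp
      · have h1 := hm (i - 1) (by omega)
        push Not at h1
        have h2 := Psi_fact (i - 1) h1
        rw [Nat.sub_add_cancel h0] at h2
        calc _ ≤ 2 * (2 * Psi v) := by gcongr
          _ = 4 * Psi v := by rw [← mul_assoc]; norm_num
          _ ≤ _ := le_add_self

lemma jmp_meas (a : ℝ≥0∞) {u v : Circle1 → ℝ≥0∞} (hu : Measurable u) (hv : Measurable v) :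
    Measurable (fun x => jmp a (u x) (v x)) := by
  unfold jmp
  exact Measurable.ite ((measurableSet_lt hv measurable_const).inter
    (measurableSet_le measurable_const hu)) hu measurable_const

lemma sub_meas {u : Circle1 → ℝ≥0∞} (hu : Measurable u) (a : ℝ≥0∞) :
    Measurable (fun x => u x - a) := hu.sub measurable_const

lemma step {g : Circle1 → ℝ≥0∞} (hg : Measurable g) {m n : ℕ} (hn : 0 < n) (hd : m ∣ n)
    {a : ℝ≥0∞} (ha : a ≠ ⊤) :
    (∫⁻ x, jmp a (RS m g x) (RS n g x)) + 2 * ∫⁻ x, (RS n g x - a) ≤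
      2 * ∫⁻ x, (RS m g x - a) := by
  have hum := RS_meas (n := m) hg
  have hvm := RS_meas (n := n) hg
  set u := RS m g with hu
  set v := RS n g with hv
  set χ : Circle1 → ℝ≥0∞ := fun x => if v x < a then 0 else 1 with hχ
  have hχm : Measurable χ := Measurable.ite (measurableSet_lt hvm measurable_const)
    measurable_const measurable_const
  have hχi : PInv n χ := (RS_inv hn g).comp (fun t => if t < a then 0 else 1)
  have h1 : ∫⁻ x, (v x - a) ≤ ∫⁻ x, χ x * (u x - a) := by
    rw [← RS_lintegral hn (g := fun x => χ x * (u x - a)) (hχm.mul (sub_meas hum _))]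
    apply lintegral_mono
    intro x
    show v x - a ≤ RS n (fun x => χ x * (u x - a)) x
    rw [RS_pull hχi]
    by_cases hx : v x < a
    · rw [tsub_eq_zero_of_le hx.le]; simp
    · simp only [hχ, if_neg hx, one_mul]
      have := RS_jensen hn u a x
      rwa [hu, RS_tower hn hd, ← hu, ← hv] at this
  rw [← lintegral_const_mul _ (sub_meas hvm _),
    ← lintegral_const_mul _ (sub_meas hum _)]
  calc _ ≤ (∫⁻ x, jmp a (u x) (v x)) + ∫⁻ x, 2 * (χ x * (u x - a)) := by
        refine add_le_add le_rfl ?_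
        rw [lintegral_const_mul _ (sub_meas hvm _),
          lintegral_const_mul _ (f := fun x => χ x * (u x - a)) (hχm.mul (sub_meas hum _))]
        exact mul_le_mul_right h1 2
    _ = ∫⁻ x, (jmp a (u x) (v x) + 2 * (χ x * (u x - a))) :=
        (lintegral_add_left (jmp_meas a hum hvm) _).symm
    _ ≤ _ := by
        apply lintegral_mono
        intro x
        show jmp a (u x) (v x) + 2 * (χ x * (u x - a)) ≤ 2 * (u x - a)
        by_cases hx : v x < a
        · simp only [jmp, hx, true_and, hχ, if_true, zero_mul, mul_zero, add_zero]
          split_ifs with h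
          · rw [ENNReal.mul_sub (by simp)]
            apply ENNReal.le_sub_of_add_le_right (ENNReal.mul_ne_top (by simp) ha)
            rw [two_mul (u x)]
            gcongr
          · simp
        · simp [jmp, hx, hχ]

lemma sum_jmp {g : Circle1 → ℝ≥0∞} (hg : Measurable g) {a : ℝ≥0∞} (ha : a ≠ ⊤) :
    ∑' j : ℕ, ∫⁻ x, jmp a (RS (PP j) g x) (RS (PP (j + 1)) g x) ≤ 2 * ∫⁻ x, (g x - a) := by
  rw [ENNReal.tsum_eq_iSup_nat]
  apply iSup_le
  intro J
  have h : (∑ j ∈ Finset.range J, ∫⁻ x, jmp a (RS (PP j) g x) (RS (PP (j + 1)) g x))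
      + 2 * ∫⁻ x, (RS (PP J) g x - a) ≤ 2 * ∫⁻ x, (g x - a) := by
    induction J with
    | zero =>
      simp only [Finset.range_zero, Finset.sum_empty, zero_add]
      refine mul_le_mul_right ?_ 2
      rw [← RS_lintegral (PP_pos 0) (g := fun x => g x - a) (sub_meas hg _)]
      exact lintegral_mono (fun x => RS_jensen (PP_pos 0) g a x)
    | succ J ih =>
      rw [Finset.sum_range_succ, add_assoc]
      refine le_trans ?_ ih
      gcongr
      exact step hg (PP_pos _) (PP_dvd (Nat.le_succ J)) ha
  exact le_self_add.trans h

lemma bb_meas {u v : Circle1 → ℝ≥0∞} (hu : Measurable u) (hv : Measurable v) :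
    Measurable (fun x => bb (u x) (v x)) := by
  unfold bb
  exact Measurable.tsum (fun i => jmp_meas _ hu hv)

lemma sum_bb {g : Circle1 → ℝ≥0∞} (hg : Measurable g) :
    ∑' j : ℕ, ∫⁻ x, bb (RS (PP j) g x) (RS (PP (j + 1)) g x) ≤ 2 * ∫⁻ x, Psi (g x) := by
  unfold bb Psi
  have h1 : ∀ j : ℕ, ∫⁻ x, ∑' i : ℕ, jmp ((i ! : ℕ) : ℝ≥0∞) (RS (PP j) g x) (RS (PP (j + 1)) g x)
      = ∑' i : ℕ, ∫⁻ x, jmp ((i ! : ℕ) : ℝ≥0∞) (RS (PP j) g x) (RS (PP (j + 1)) g x) := fun j =>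
    lintegral_tsum (fun i => (jmp_meas _ (RS_meas hg) (RS_meas hg)).aemeasurable)
  simp_rw [h1]
  rw [ENNReal.tsum_comm, lintegral_tsum (fun i => (sub_meas hg _).aemeasurable),
    ← ENNReal.tsum_mul_left]
  apply ENNReal.tsum_le_tsum
  intro i
  refine (sum_jmp hg (by simp)).trans ?_
  gcongr
  exact ENNReal.half_le_self

lemma maximal_E {g : Circle1 → ℝ≥0∞} (hg : Measurable g) :
    volume {x | ∃ n ∈ Eset, 7 < RS n g x} ≤ 3 * ∫⁻ x, Psi (g x) := by
  have hsub : {x | ∃ n ∈ Eset, 7 < RS n g x} ⊆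
      {x | ∃ k, 1 < RS (PP k) (fun x => Psi (g x)) x} ∪
      ⋃ j, {x | ∃ k, 1 < RS (QQ j k) (fun x => bb (RS (PP j) g x) (RS (PP (j + 1)) g x)) x} := by
    rintro x ⟨n, ⟨k, hk, j, hj, rfl⟩, hx⟩
    by_contra hcon
    simp only [mem_union, mem_ofPred_eq, mem_iUnion, not_or, not_exists, not_lt] at hcon
    obtain ⟨h1, h2⟩ := hcon
    change 7 < RS (QQ j k) g x at hx
    have h3 : RS (QQ j k) g x ≤ 2 + 4 * RS (PP k) (fun x => Psi (g x)) x +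
        RS (QQ j k) (fun x => bb (RS (PP j) g x) (RS (PP (j + 1)) g x)) x := by
      rw [← RS_tower (QQ_pos j k) (PP_dvd_QQ hj) g]
      refine (RS_mono (fun x => pointwise (RS (PP j) g x) (RS (PP (j + 1)) g x)) x).trans ?_
      rw [RS_add, RS_add, RS_const (QQ_pos j k), RS_mul]
      gcongr
      rw [← RS_QQ hj]
      exact RS_mono (fun x => RS_Psi (PP_pos _) g x) x
    have h4 : RS (QQ j k) g x ≤ 2 + 4 * 1 + 1 := h3.trans (by gcongr; exacts [h1 k, h2 j k])
    have h5 : (2 + 4 * 1 + 1 : ℝ≥0∞) = 7 := by norm_num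
    rw [h5] at h4
    exact absurd hx (not_lt.2 h4)
  refine (measure_mono hsub).trans ((measure_union_le _ _).trans ?_)
  have h1 := maximal (N := PP) PP_pos (fun k l h => PP_dvd h) (g := fun x => Psi (g x))
    (Psi_meas.comp hg)
  have h2 : ∀ j, volume {x | ∃ k, 1 < RS (QQ j k)
      (fun x => bb (RS (PP j) g x) (RS (PP (j + 1)) g x)) x} ≤
      ∫⁻ x, bb (RS (PP j) g x) (RS (PP (j + 1)) g x) := fun j =>
    maximal (N := QQ j) (QQ_pos j) (fun k l h => QQ_dvd h) (bb_meas (RS_meas hg) (RS_meas hg))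
  calc _ ≤ (∫⁻ x, Psi (g x)) + 2 * ∫⁻ x, Psi (g x) :=
        add_le_add h1 ((measure_iUnion_le _).trans
          ((ENNReal.tsum_le_tsum h2).trans (sum_bb hg)))
    _ = 3 * ∫⁻ x, Psi (g x) := by ring

lemma vol_univ : (volume : Measure Circle1) univ = 1 := by
  rw [AddCircle.measure_univ]; simp

lemma Psi_zero : Psi 0 = 0 := by simp [Psi]

lemma Psi_sq : ∃ c : ℝ≥0∞, c ≠ ⊤ ∧ ∀ t, Psi t ≤ c * t ^ 2 := by
  refine ⟨∑' i : ℕ, ENNReal.ofReal (2 * (1 ^ i / (i ! : ℝ))),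
    Summable.tsum_ofReal_ne_top ((Real.summable_pow_div_factorial 1).mul_left 2), fun t => ?_⟩
  rw [← ENNReal.tsum_mul_right]
  apply ENNReal.tsum_le_tsum
  intro i
  have hpos : (0 : ℝ) < (i ! : ℝ) := by exact_mod_cast Nat.factorial_pos i
  have e : ENNReal.ofReal (2 * (1 ^ i / (i ! : ℝ))) = (((i ! : ℕ) : ℝ≥0∞) / 2)⁻¹ := by
    rw [one_pow, ← mul_div_assoc, mul_one, ENNReal.ofReal_div_of_pos hpos, ENNReal.inv_div]
    · simp
    · simp
    · simp
  rw [e]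
  set s := ((i ! : ℕ) : ℝ≥0∞) / 2 with hs
  have hs0 : s ≠ 0 := by simp [hs, Nat.factorial_ne_zero]
  have hst : s ≠ ⊤ := (ENNReal.div_lt_top (by simp) (by simp)).ne
  rcases le_total t s with h | h
  · rw [tsub_eq_zero_of_le h]; exact zero_le
  · calc t - s ≤ t := tsub_le_self
      _ = s⁻¹ * s * t := by rw [ENNReal.inv_mul_cancel hs0 hst, one_mul]
      _ ≤ s⁻¹ * t * t := by gcongr
      _ = s⁻¹ * t ^ 2 := by ring

lemma Psi_count {s : ℝ} (hs : 0 ≤ s) {M : ℕ} (hM : 2 * s ≤ (M ! : ℝ)) :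
    Psi (ENNReal.ofReal s) ≤ ENNReal.ofReal (M * s) := by
  unfold Psi
  rw [tsum_eq_sum (s := Finset.range M)]
  · calc _ ≤ ∑ _i ∈ Finset.range M, ENNReal.ofReal s := Finset.sum_le_sum (fun i _ => tsub_le_self)
      _ = _ := by
        rw [Finset.sum_const, Finset.card_range, nsmul_eq_mul,
          ENNReal.ofReal_mul (by positivity), ENNReal.ofReal_natCast]
  · intro i hi
    apply tsub_eq_zero_of_le
    have h1 : M ≤ i := by simpa using hi
    have h2 : (M ! : ℝ) ≤ (i ! : ℝ) := by exact_mod_cast Nat.factorial_le h1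
    calc ENNReal.ofReal s ≤ ENNReal.ofReal ((i ! : ℝ) / 2) :=
          ENNReal.ofReal_le_ofReal (by linarith)
      _ = _ := by rw [ENNReal.ofReal_div_of_pos (by norm_num)]; simp

lemma Psi_fin {s : ℝ} (hs : 0 ≤ s) : Psi (ENNReal.ofReal s) ≠ ⊤ := by
  obtain ⟨n, hn⟩ := exists_nat_ge (2 * s)
  have : 2 * s ≤ (n ! : ℝ) := hn.trans (by exact_mod_cast Nat.self_le_factorial n)
  exact ((Psi_count hs this).trans_lt ENNReal.ofReal_lt_top).ne

lemma fact_lower {M : ℕ} (hM : 0 < M) : M * (Real.log M - 1) ≤ Real.log (M ! : ℝ) := by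
  have h := Real.pow_div_factorial_le_exp (M : ℝ) (by positivity) M
  have hM' : (0 : ℝ) < M := by exact_mod_cast hM
  have hpos : (0 : ℝ) < (M ! : ℝ) := by exact_mod_cast Nat.factorial_pos M
  have h2 := Real.log_le_log (by positivity) h
  rw [Real.log_div (by positivity) (by positivity), Real.log_pow, Real.log_exp] at h2
  linarith

lemma growth {ε : ℝ} (hε : 0 < ε) {t : ℝ} (h1 : Real.exp (Real.exp 4) ≤ t) (h2 : 2 / ε ≤ t) :
    Psi (ENNReal.ofReal (t / ε)) ≤ ENNReal.ofReal (18 / ε * PhiE t) := by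
  have ht : 0 < t := (Real.exp_pos _).trans_le h1
  set x := Real.log t with hx
  have hx1 : Real.exp 4 ≤ x := by
    rw [hx, Real.le_log_iff_exp_le ht]; exact h1
  have hx0 : 0 < x := (Real.exp_pos _).trans_le hx1
  have hx5 : 5 ≤ x := by have := Real.add_one_le_exp (4 : ℝ); linarith
  set L := Real.log x with hL
  have hL4 : 4 ≤ L := by
    rw [hL, Real.le_log_iff_exp_le hx0]; exact hx1
  have hL0 : 0 < L := by linarith
  have hLx : L ≤ x := (Real.log_le_sub_one_of_pos hx0).trans (by linarith)
  set M := ⌈8 * x / L⌉₊ with hM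
  have hMge : 8 * x / L ≤ M := Nat.le_ceil _
  have hMlt : (M : ℝ) < 8 * x / L + 1 := Nat.ceil_lt_add_one (by positivity)
  have hq : 0 < 8 * x / L := by positivity
  have hMpos : (0 : ℝ) < M := hq.trans_le hMge
  have hML : 8 * x ≤ M * L := by rwa [div_le_iff₀ hL0] at hMge
  -- log M ≥ L / 2
  have hsq : Real.sqrt x ≤ M := by
    have hs0 : 0 < Real.sqrt x := Real.sqrt_pos.2 hx0
    have hss : Real.sqrt x * Real.sqrt x = x := Real.mul_self_sqrt hx0.le
    have hl : L / 2 ≤ Real.sqrt x := by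
      rw [hL, ← Real.log_sqrt hx0.le]
      exact (Real.log_le_sub_one_of_pos hs0).trans (by linarith)
    refine le_trans ?_ hMge
    rw [le_div_iff₀ hL0]
    nlinarith
  have hlogM : L / 2 ≤ Real.log M := by
    rw [hL, ← Real.log_sqrt hx0.le]
    exact Real.log_le_log (Real.sqrt_pos.2 hx0) hsq
  have hfl := fact_lower (M := M) (by exact_mod_cast hMpos)
  have hfpos : (0 : ℝ) < (M ! : ℝ) := by exact_mod_cast Nat.factorial_pos M
  have hlog : 2 * x ≤ Real.log (M ! : ℝ) := by
    refine le_trans ?_ hfl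
    have : (M : ℝ) * (L / 4) ≤ M * (Real.log M - 1) := by
      apply mul_le_mul_of_nonneg_left _ hMpos.le
      linarith
    nlinarith
  have hbig : 2 * (t / ε) ≤ (M ! : ℝ) := by
    have h3 : t ^ 2 ≤ (M ! : ℝ) := by
      rw [← Real.log_le_log_iff (by positivity) hfpos, Real.log_pow]
      exact_mod_cast hlog
    have : 2 * (t / ε) = t * (2 / ε) := by ring
    rw [this]
    nlinarith
  refine (Psi_count (by positivity) hbig).trans (ENNReal.ofReal_le_ofReal ?_)
  -- lower bound on Phi
  have hM9 : (M : ℝ) ≤ 9 * (x / L) := by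
    have : 1 ≤ x / L := by rwa [le_div_iff₀ hL0, one_mul]
    have e : 8 * x / L = 8 * (x / L) := by ring
    linarith
  have hlog1 : x ≤ Real.log (1 + t) := Real.log_le_log ht (by linarith)
  have ht5 : 5 ≤ t := by
    have := Real.add_one_le_exp x
    rw [hx, Real.exp_log ht] at this
    linarith
  have hlog3 : Real.log (3 + t) ≤ x ^ 2 := by
    have : Real.log (3 + t) ≤ Real.log (t ^ 2) := Real.log_le_log (by linarith) (by nlinarith)
    rw [Real.log_pow] at this
    push_cast at this
    nlinarith
  have hlog3x : x ≤ Real.log (3 + t) := Real.log_le_log ht (by linarith)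
  have hll : Real.log (Real.log (3 + t)) ≤ 2 * L := by
    have := Real.log_le_log (by linarith) hlog3
    rw [Real.log_pow] at this
    exact_mod_cast this
  have hll0 : 0 < Real.log (Real.log (3 + t)) := Real.log_pos (by linarith)
  have hPhi : t * x / (2 * L) ≤ PhiE t := by
    have hnn : 0 ≤ t * Real.log (1 + t) := mul_nonneg ht.le (hx0.le.trans hlog1)
    unfold PhiE
    gcongr
  calc (M : ℝ) * (t / ε) ≤ 9 * (x / L) * (t / ε) := by gcongr
    _ = 18 / ε * (t * x / (2 * L)) := by field_simp; norm_num
    _ ≤ _ := by gcongr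

lemma Psi_int (f : Circle1 → ℝ)
    (hfΦ : (∫⁻ x, ENNReal.ofReal (PhiE |f x|)) < ⊤) {ε : ℝ} (hε : 0 < ε) :
    ∫⁻ x, Psi (ENNReal.ofReal (|f x| / ε)) ≠ ⊤ := by
  set T := max (Real.exp (Real.exp 4)) (2 / ε) with hT
  have hT0 : 0 ≤ T := (Real.exp_pos _).le.trans (le_max_left _ _)
  have hb : ∀ x, Psi (ENNReal.ofReal (|f x| / ε)) ≤
      Psi (ENNReal.ofReal (T / ε)) + ENNReal.ofReal (18 / ε) * ENNReal.ofReal (PhiE |f x|) := by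
    intro x
    rcases le_total (|f x|) T with h | h
    · refine le_trans (Psi_mono (ENNReal.ofReal_le_ofReal ?_)) le_self_add
      gcongr
    · refine le_trans (growth hε ((le_max_left _ _).trans h) ((le_max_right _ _).trans h)) ?_
      rw [ENNReal.ofReal_mul (by positivity)]
      exact le_add_self
  refine ((lintegral_mono hb).trans_lt ?_).ne
  rw [lintegral_add_left measurable_const, lintegral_const, vol_univ,
    lintegral_const_mul' _ _ ENNReal.ofReal_ne_top]
  refine ENNReal.add_lt_top.2 ⟨?_, ENNReal.mul_lt_top ENNReal.ofReal_lt_top hfΦ⟩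
  rw [mul_one]
  exact (Psi_fin (by positivity)).lt_top

lemma approx (f : Circle1 → ℝ) (hf : Measurable f)
    (hI : ∀ ε : ℝ, 0 < ε → ∫⁻ x, Psi (ENNReal.ofReal (|f x| / ε)) ≠ ⊤)
    {ε : ℝ} (hε : 0 < ε) {δ : ℝ≥0∞} (hδ : 0 < δ) :
    ∃ g : Circle1 → ℝ, Continuous g ∧ ∫⁻ x, Psi (ENNReal.ofReal (|f x - g x| / ε)) ≤ δ := by
  have hδ2 : 0 < δ / 2 := ENNReal.half_pos hδ.ne'
  -- truncation
  let F : ℕ → Circle1 → ℝ := fun N x => if |f x| ≤ N then f x else 0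
  have hset : ∀ N : ℕ, MeasurableSet {x | |f x| ≤ (N : ℝ)} := fun N =>
    measurableSet_le (measurable_norm.comp hf) measurable_const
  have hF : ∀ N, Measurable (F N) := fun N => Measurable.ite (hset N) hf measurable_const
  let H : ℕ → Circle1 → ℝ≥0∞ := fun N x => Psi (ENNReal.ofReal (|f x - F N x| / (ε / 2)))
  have hH : ∀ N, Measurable (H N) := fun N =>
    Psi_meas.comp ((measurable_norm.comp (hf.sub (hF N))).div_const _).ennreal_ofReal
  have ht : Tendsto (fun N => ∫⁻ x, H N x) atTop (nhds (∫⁻ _x : Circle1, 0)) := by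
    refine tendsto_lintegral_of_dominated_convergence
      (fun x => Psi (ENNReal.ofReal (|f x| / (ε / 2)))) hH ?_ (hI (ε / 2) (by positivity)) ?_
    · intro N
      refine Eventually.of_forall (fun x => Psi_mono (ENNReal.ofReal_le_ofReal ?_))
      refine div_le_div_of_nonneg_right ?_ (by positivity)
      simp only [F]
      split_ifs <;> simp
    · refine Eventually.of_forall (fun x => ?_)
      apply tendsto_const_nhds.congr'
      obtain ⟨n, hn⟩ := exists_nat_ge (|f x|)
      filter_upwards [eventually_ge_atTop n] with N hN
      have : |f x| ≤ (N : ℝ) := hn.trans (by exact_mod_cast hN)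
      simp [H, F, this, Psi_zero]
  rw [lintegral_zero] at ht
  obtain ⟨N, hN⟩ := (ht.eventually (ge_mem_nhds hδ2)).exists
  -- L² approximation
  have hmem : MemLp (F N) 2 (volume : Measure Circle1) := by
    refine MemLp.of_bound (hF N).aestronglyMeasurable N (Eventually.of_forall fun x => ?_)
    simp only [F]
    split_ifs with h
    · exact h
    · simp
  obtain ⟨c, hc, hsq⟩ := Psi_sq
  set c' : ℝ≥0∞ := c * (ENNReal.ofReal (2 / ε)) ^ 2 with hc'
  have hc't : c' ≠ ⊤ := ENNReal.mul_ne_top hc (by simp)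
  obtain ⟨η, hη0, hη⟩ : ∃ η : ℝ≥0∞, η ≠ 0 ∧ c' * η ^ 2 ≤ δ / 2 := by
    have h1 : Tendsto (fun η : ℝ≥0∞ => c' * η ^ 2) (nhdsWithin 0 (Ioi 0)) (nhds (c' * 0 ^ 2)) := by
      apply Tendsto.mono_left _ nhdsWithin_le_nhds
      exact ENNReal.Tendsto.const_mul ((ENNReal.continuous_pow 2).tendsto 0) (Or.inr hc't)
    have h2 : c' * 0 ^ 2 < δ / 2 := by simpa using hδ2
    obtain ⟨η, h3, h4⟩ := ((h1.eventually (ge_mem_nhds h2)).and self_mem_nhdsWithin).exists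
    exact ⟨η, (ne_of_gt h4), h3⟩
  obtain ⟨g, hg, -⟩ := hmem.exists_boundedContinuous_eLpNorm_sub_le (by simp) hη0
  refine ⟨g, g.continuous, ?_⟩
  have hgm : Measurable g := g.continuous.measurable
  have hpt : ∀ x, Psi (ENNReal.ofReal (|f x - g x| / ε)) ≤
      H N x + c' * ‖(F N - ⇑g) x‖ₑ ^ (2 : ℝ) := by
    intro x
    have hR : Psi (ENNReal.ofReal (|F N x - g x| / (ε / 2))) ≤
        c' * ‖(F N - ⇑g) x‖ₑ ^ (2 : ℝ) := by
      refine (hsq _).trans (le_of_eq ?_)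
      have : |F N x - g x| / (ε / 2) = 2 / ε * |F N x - g x| := by field_simp
      rw [this, ENNReal.ofReal_mul (by positivity), mul_pow, hc', mul_assoc]
      congr 2
      rw [← Real.norm_eq_abs, ofReal_norm]
      norm_cast
    have tri : |f x - g x| ≤ |f x - F N x| + |F N x - g x| := abs_sub_le _ _ _
    rcases le_total (|f x - F N x|) (|F N x - g x|) with h | h
    · refine le_trans ((Psi_mono (ENNReal.ofReal_le_ofReal ?_)).trans hR) le_add_self
      rw [div_le_div_iff₀ hε (by positivity)]
      nlinarith
    · refine le_trans (Psi_mono (ENNReal.ofReal_le_ofReal ?_)) le_self_add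
      rw [div_le_div_iff₀ hε (by positivity)]
      nlinarith
  refine (lintegral_mono hpt).trans ?_
  rw [lintegral_add_left (hH N), lintegral_const_mul' _ _ hc't]
  have h2 := eLpNorm_nnreal_pow_eq_lintegral (μ := (volume : Measure Circle1)) (f := F N - ⇑g)
    (p := 2) (by norm_num)
  have h3 : ∫⁻ x, ‖(F N - ⇑g) x‖ₑ ^ (2 : ℝ) = eLpNorm (F N - ⇑g) 2 volume ^ (2 : ℝ) := by
    exact h2.symm
  rw [h3]
  calc _ ≤ δ / 2 + c' * η ^ 2 := by
        gcongr
        exact_mod_cast pow_le_pow_left' hg 2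
    _ ≤ δ / 2 + δ / 2 := by gcongr
    _ = δ := ENNReal.add_halves _

lemma cont_conv (g : Circle1 → ℝ) (hg : Continuous g) {ε : ℝ} (hε : 0 < ε) (x : Circle1) :
    ∀ᶠ n in atTop, |RiemannSum n g x - ∫ t, g t| ≤ ε := by
  have hu := CompactSpace.uniformContinuous_of_continuous hg
  obtain ⟨d, hd, hud⟩ := Metric.uniformContinuous_iff.1 hu ε hε
  obtain ⟨n0, hn0⟩ := exists_nat_gt (1 / d)
  filter_upwards [eventually_ge_atTop (max n0 1)] with n hn
  have hn1 : 1 ≤ n := (le_max_right _ _).trans hn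
  have hnR : (0 : ℝ) < n := by exact_mod_cast hn1
  have hnd : 1 / (n : ℝ) < d := by
    rw [div_lt_comm₀ hnR hd]
    exact hn0.trans_le (by exact_mod_cast (le_max_left _ _).trans hn)
  let φ' : ℝ → ℝ := fun t => g (x + (t : Circle1))
  have hφ : Continuous φ' := by
    exact hg.comp (continuous_const.add (AddCircle.continuous_mk' 1))
  have hint : ∫ t, g t = ∫ t in (0 : ℝ)..1, φ' t := by
    rw [← integral_add_left_eq_self g x,
      ← AddCircle.intervalIntegral_preimage 1 0 (fun t => g (x + t))]
    simp [φ']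
  let a : ℕ → ℝ := fun k => (k : ℝ) / n
  have hsum := intervalIntegral.sum_integral_adjacent_intervals (f := φ') (μ := volume) (a := a)
    (n := n) (fun k _ => hφ.intervalIntegrable _ _)
  have ha0 : a 0 = 0 := by simp [a]
  have han : a n = 1 := by simp [a, hnR.ne']
  rw [ha0, han] at hsum
  have hlen : ∀ k, a (k + 1) - a k = (n : ℝ)⁻¹ := by
    intro k; simp only [a]; push_cast; field_simp; ring
  have hR : RiemannSum n g x = ∑ k ∈ Finset.range n, ∫ _t in a k..a (k + 1), φ' (a k) := by
    unfold RiemannSum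
    rw [Finset.mul_sum]
    refine Finset.sum_congr rfl (fun k _ => ?_)
    rw [intervalIntegral.integral_const, hlen, smul_eq_mul]
  rw [hint, ← hsum, hR, ← Finset.sum_sub_distrib]
  calc _ ≤ ∑ k ∈ Finset.range n, |(∫ _t in a k..a (k + 1), φ' (a k)) - ∫ t in a k..a (k + 1), φ' t| :=
        Finset.abs_sum_le_sum_abs _ _
    _ ≤ ∑ k ∈ Finset.range n, ε * (n : ℝ)⁻¹ := by
        refine Finset.sum_le_sum (fun k _ => ?_)
        rw [← intervalIntegral.integral_sub (continuous_const.intervalIntegrable _ _)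
          (hφ.intervalIntegrable _ _)]
        have hp : (0 : ℝ) < (n : ℝ)⁻¹ := by positivity
        have h := intervalIntegral.norm_integral_le_of_norm_le_const (a := a k) (b := a (k + 1))
          (C := ε) (f := fun t => φ' (a k) - φ' t) ?_
        · rwa [hlen, abs_of_pos hp, Real.norm_eq_abs] at h
        · intro t ht
          rw [uIoc_of_le (by linarith [hlen k])] at ht
          apply le_of_lt
          rw [← dist_eq_norm]
          apply hud
          rw [dist_add_left, dist_eq_norm, ← AddCircle.coe_sub]
          refine lt_of_le_of_lt (QuotientAddGroup.norm_mk_le_norm (m := a k - t)) ?_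
          rw [Real.norm_eq_abs]
          rw [abs_lt]
          rw [one_div] at hnd
          constructor <;> linarith [hlen k, ht.1, ht.2]
    _ = ε := by simp; field_simp

lemma RS_real (n : ℕ) (h : Circle1 → ℝ) {ε : ℝ} (hε : 0 < ε) (x : Circle1) :
    ENNReal.ofReal (|RiemannSum n h x| / ε) ≤ RS n (fun x => ENNReal.ofReal (|h x| / ε)) x := by
  rcases Nat.eq_zero_or_pos n with h0 | hn
  · subst h0; simp [RiemannSum]
  have hn' : (0 : ℝ) < n := by exact_mod_cast hn
  unfold RS RiemannSum
  rw [← ENNReal.ofReal_sum_of_nonneg (fun i _ => by positivity), ← ENNReal.ofReal_natCast,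
    ← ENNReal.ofReal_inv_of_pos hn', ← ENNReal.ofReal_mul (by positivity)]
  apply ENNReal.ofReal_le_ofReal
  rw [abs_mul, abs_of_pos (by positivity : (0 : ℝ) < (n : ℝ)⁻¹), ← Finset.sum_div, mul_div_assoc]
  gcongr
  exact Finset.abs_sum_le_sum_abs _ _

lemma RiemannSum_sub (n : ℕ) (f g : Circle1 → ℝ) (x : Circle1) :
    RiemannSum n (fun x => f x - g x) x = RiemannSum n f x - RiemannSum n g x := by
  unfold RiemannSum
  rw [Finset.sum_sub_distrib, mul_sub]

lemma enorm_bound {h : Circle1 → ℝ} (hh : Measurable h) {ε : ℝ} (hε : 0 < ε) :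
    ∫⁻ x, ‖h x‖ₑ ≤ ENNReal.ofReal ε * ((∫⁻ x, Psi (ENNReal.ofReal (|h x| / ε))) + 1 / 2) := by
  have hp : ∀ x, ‖h x‖ₑ ≤ ENNReal.ofReal ε * (Psi (ENNReal.ofReal (|h x| / ε)) + 1 / 2) := by
    intro x
    have h1 : ‖h x‖ₑ = ENNReal.ofReal ε * ENNReal.ofReal (|h x| / ε) := by
      rw [← ENNReal.ofReal_mul hε.le, mul_div_cancel₀ _ hε.ne', ← Real.norm_eq_abs,
        ofReal_norm]
    rw [h1]
    gcongr
    rw [← tsub_le_iff_right]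
    refine le_trans (le_of_eq ?_) (ENNReal.le_tsum 0)
    simp
  refine (lintegral_mono hp).trans (le_of_eq ?_)
  rw [lintegral_const_mul' _ _ ENNReal.ofReal_ne_top, lintegral_add_right _ measurable_const,
    lintegral_const, vol_univ, mul_one]

lemma key (f : Circle1 → ℝ) (hf : Measurable f)
    (hI : ∀ ε : ℝ, 0 < ε → ∫⁻ x, Psi (ENNReal.ofReal (|f x| / ε)) ≠ ⊤)
    {ε : ℝ} (hε : 0 < ε) :
    ∀ᵐ x : Circle1, ∀ᶠ n in atTop ⊓ Filter.principal Eset,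
      |RiemannSum n f x - ∫ t, f t| ≤ 9 * ε := by
  have hfi : Integrable f (volume : Measure Circle1) := by
    refine ⟨hf.aestronglyMeasurable, ?_⟩
    refine (enorm_bound hf one_pos).trans_lt ?_
    exact ENNReal.mul_lt_top ENNReal.ofReal_lt_top
      (ENNReal.add_lt_top.2 ⟨(hI 1 one_pos).lt_top, by simp⟩)
  rw [ae_iff]
  refine le_antisymm (le_of_forall_pos_le_add ?_) zero_le
  intro δ hδ
  rw [zero_add]
  obtain ⟨g, hg, hgI⟩ := approx f hf hI hε (δ := min (δ / 3) (1 / 2))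
    (lt_min (ENNReal.div_pos hδ.ne' (by simp)) (by simp))
  have hm : Measurable (fun x => f x - g x) := hf.sub hg.measurable
  have hgi : Integrable g (volume : Measure Circle1) :=
    hg.integrable_of_hasCompactSupport (HasCompactSupport.of_compactSpace g)
  have hdiff : |(∫ t, f t) - ∫ t, g t| ≤ ε := by
    rw [← integral_sub hfi hgi, ← Real.norm_eq_abs,
      ← ENNReal.ofReal_le_ofReal_iff hε.le, ofReal_norm]
    refine (enorm_integral_le_lintegral_enorm _).trans ((enorm_bound hm hε).trans ?_)
    calc _ ≤ ENNReal.ofReal ε * (1 / 2 + 1 / 2) := by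
          refine mul_le_mul_right (add_le_add (hgI.trans (min_le_right _ _)) le_rfl) _
      _ = _ := by rw [ENNReal.add_halves, mul_one]
  have hmax := maximal_E (g := fun x => ENNReal.ofReal (|f x - g x| / ε))
    ((measurable_norm.comp hm).div_const _).ennreal_ofReal
  refine (measure_mono ?_).trans (hmax.trans ?_)
  · intro x hx
    by_contra hcon
    apply hx
    simp only [mem_ofPred_eq, not_exists, not_and, not_lt] at hcon
    have hc := (cont_conv g hg hε x).filter_mono
      (inf_le_left : atTop ⊓ Filter.principal Eset ≤ atTop)
    have hE : ∀ᶠ n in atTop ⊓ Filter.principal Eset, n ∈ Eset :=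
      mem_inf_of_right (mem_principal_self _)
    filter_upwards [hc, hE] with n h1 h2
    have h3 := (RS_real n (fun x => f x - g x) hε x).trans (hcon n h2)
    have h7 : (7 : ℝ≥0∞) = ENNReal.ofReal 7 := by simp
    rw [h7, ENNReal.ofReal_le_ofReal_iff (by norm_num), div_le_iff₀ hε, RiemannSum_sub] at h3
    rw [abs_le] at *
    constructor <;> linarith [h1.1, h1.2, h3.1, h3.2, hdiff.1, hdiff.2]
  · calc _ ≤ 3 * (δ / 3) := mul_le_mul_right (hgI.trans (min_le_left _ _)) _
      _ = δ := ENNReal.mul_div_cancel (by simp) (by simp)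

/-- **Almost everywhere convergence along `E` in `L^Φ` (Theorem 2).** For every
`f ∈ L^Φ(𝕋)`, the Riemann sums `R_n f(x)` converge to `∫_0^1 f` as `n → ∞` along `E`,
for almost every `x`. -/
theorem riemannSums_tendsto_ae_Eset
    (f : Circle1 → ℝ) (hf : Measurable f)
    (hfΦ : (∫⁻ x, ENNReal.ofReal (PhiE |f x|)) < ⊤) :
    ∀ᵐ x : Circle1,
      Tendsto (fun n => RiemannSum n f x) (atTop ⊓ Filter.principal Eset)
        (nhds (∫ t, f t)) := by
  have hI := fun ε (hε : 0 < ε) => Psi_int f hfΦ (ε := ε) hε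
  have h : ∀ m : ℕ, ∀ᵐ x : Circle1, ∀ᶠ n in atTop ⊓ Filter.principal Eset,
      |RiemannSum n f x - ∫ t, f t| ≤ 9 * (1 / ((m : ℝ) + 1)) :=
    fun m => key f hf hI (by positivity)
  filter_upwards [ae_all_iff.2 h] with x hx
  rw [Metric.tendsto_nhds]
  intro ε hε
  obtain ⟨m, hm⟩ := exists_nat_one_div_lt (show 0 < ε / 9 by positivity)
  filter_upwards [hx m] with n hn
  rw [Real.dist_eq]
  linarith
end

section
/- Let (n_k) be the increasing enumeration of the set E = {p_1⋯p_{j−1} p̌_j p_{j+1}⋯p_k : k ≥ 2, 1 ≤ j ≤ k}. If an increasing function φ : ℝ⁺ → ℝ⁺ satisfies lim_{x→∞} φ(x)·ln ln x/(x ln x) = 0, then there exists a function f ∈ L^φ(𝕋) such that the sequence (R_{n_k} f(x))_k diverges for every x ∈ 𝕋. -/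
open MeasureTheory Filter Set

lemma ev_log_le (c : ℝ) (hc : 0 < c) : ∀ᶠ y : ℝ in atTop, Real.log y ≤ c * y := by
  have h := Real.isLittleO_log_id_atTop.bound hc
  filter_upwards [h, eventually_ge_atTop 1] with y hy h1
  simp only [id, Real.norm_eq_abs] at hy
  rw [abs_of_nonneg (by linarith : (0:ℝ) ≤ y)] at hy
  exact (le_abs_self _).trans hy

lemma ev_log_le_sqrt (c : ℝ) (hc : 0 < c) : ∀ᶠ y : ℝ in atTop, Real.log y ≤ c * √y := by
  have h := (isLittleO_log_rpow_atTop (r := 1/2) (by norm_num)).bound hc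
  filter_upwards [h, eventually_ge_atTop 1] with y hy h1
  rw [← Real.sqrt_eq_rpow, Real.norm_eq_abs, Real.norm_eq_abs, abs_of_nonneg (Real.sqrt_nonneg _)] at hy
  exact (le_abs_self _).trans hy

noncomputable def pBlock (y : ℝ) : Finset ℕ := (Finset.Ioc ⌊y/4⌋₊ ⌊y⌋₊).filter Nat.Prime

lemma pBlock_sum (y : ℝ) (hy : 0 ≤ y) :
    ∑ p ∈ pBlock y, Real.log (p:ℝ) = Chebyshev.theta y - Chebyshev.theta (y/4) := by
  unfold Chebyshev.theta pBlock
  have hle : ⌊y/4⌋₊ ≤ ⌊y⌋₊ := Nat.floor_mono (by linarith)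
  rw [eq_sub_iff_add_eq, add_comm, ← Finset.sum_union]
  · congr 1
    rw [← Finset.filter_union, Finset.Ioc_union_Ioc_eq_Ioc (Nat.zero_le _) hle]
  · apply Finset.disjoint_filter_filter
    rw [Finset.disjoint_left]
    intro a ha hb
    simp at ha hb; omega

lemma pBlock_lower : ∀ᶠ y : ℝ in atTop, y / 4 ≤ ∑ p ∈ pBlock y, Real.log (p:ℝ) := by
  filter_upwards [eventually_ge_atTop 100, ev_log_le_sqrt (1/100) (by norm_num)] with y hy h1
  rw [pBlock_sum y (by linarith)]
  have a := Chebyshev.theta_ge' (x := y) (by linarith)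
  have b := Chebyshev.theta_le_log4_mul_x (x := y/4) (by linarith)
  have l4 : Real.log 4 = 2 * Real.log 2 := by
    rw [show (4:ℝ) = 2^2 by norm_num, Real.log_pow]; norm_num
  have l2 := Real.log_two_gt_d9
  have l2' := Real.log_two_lt_d9
  have hs := Real.sq_sqrt (show 0 ≤ y by linarith)
  have hs0 := Real.sqrt_nonneg y
  have hs10 : 10 ≤ √y := by
    rw [Real.le_sqrt (by norm_num) (by linarith)]; linarith
  have e1 : Real.log (y+2) ≤ 2 * Real.log y := by
    rw [← Real.log_rpow (by linarith)]
    apply Real.log_le_log (by linarith)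
    rw [Real.rpow_two]; nlinarith
  have e2 : 2 * √y * Real.log y ≤ y / 50 := by nlinarith
  rw [l4] at b
  nlinarith

lemma pBlock_upper (y : ℝ) (hy : 0 ≤ y) : ∑ p ∈ pBlock y, Real.log (p:ℝ) ≤ 2 * y := by
  rw [pBlock_sum y hy]
  have b := Chebyshev.theta_le_log4_mul_x (x := y) (by linarith)
  have c := Chebyshev.theta_nonneg (y/4)
  have l4 : Real.log 4 = 2 * Real.log 2 := by
    rw [show (4:ℝ) = 2^2 by norm_num, Real.log_pow]; norm_num
  have l2' := Real.log_two_lt_d9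
  nlinarith

lemma analytic (φ : ℝ → ℝ) 
    (hφ : Tendsto (fun x : ℝ => φ x * Real.log (Real.log x) / (x * Real.log x))
      atTop (nhds 0)) (M η : ℝ) (hM : 0 < M) (hη : 0 < η) :
    ∃ (B : Finset ℕ) (S : ℕ) (H : ℝ), (∀ p ∈ B, p.Prime ∧ S ≤ p ∧ M ≤ H * p / ∏ p ∈ B, (p:ℝ)) ∧
      0 < H ∧ (S:ℝ) / ∏ p ∈ B, (p:ℝ) ≤ η ∧ φ H * ((S:ℝ) / ∏ p ∈ B, (p:ℝ)) ≤ η ∧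
      ∏ p ∈ B, (1 - (S:ℝ)/p) ≤ η := by
  obtain ⟨K, hK, hKη⟩ : ∃ K : ℝ, 0 < K ∧ Real.exp (-(K/4)) ≤ η := by
    refine ⟨max 1 (-4 * Real.log η), by positivity, ?_⟩
    rw [← Real.le_log_iff_exp_le hη]
    linarith [le_max_right 1 (-4 * Real.log η)]
  set δ := η / (24 * M * (K+1)) with hδ
  have hδ0 : 0 < δ := by positivity
  have hev := hφ.eventually (gt_mem_nhds hδ0)
  rw [eventually_atTop] at hev
  obtain ⟨X, hX⟩ := hev
  have ex : ∀ᶠ y : ℝ in atTop, X ≤ Real.exp (y/8) :=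
    (Real.tendsto_exp_atTop.comp (tendsto_id.atTop_div_const (by norm_num : (0:ℝ) < 8))).eventually
      (eventually_ge_atTop X)
  have ey : ∀ᶠ y : ℝ in atTop, 64 ≤ y ∧ 8 * |Real.log (4 * M)| ≤ y/4 ∧ Real.log y ≤ (1/32)*y ∧ 
     (K+1) * Real.log y ≤ y/4 ∧ Real.log y ≤ (η / (4*(K+1))) * y ∧ 1 ≤ Real.log y := by
    filter_upwards [eventually_ge_atTop 64, eventually_ge_atTop (32 * |Real.log (4 * M)|),
      ev_log_le (1/32) (by norm_num), ev_log_le (1/(4*(K+1))) (by positivity),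
      ev_log_le (η/(4*(K+1))) (by positivity), Real.tendsto_log_atTop.eventually (eventually_ge_atTop 1)]
      with y h1 h2 h3 h4 h5 h6
    refine ⟨h1, by linarith, h3, ?_, h5, h6⟩
    calc (K+1) * Real.log y ≤ (K+1) * (1/(4*(K+1)) * y) := by gcongr
      _ = y/4 := by field_simp
  obtain ⟨y, hlow, hXy, hy64, hyM, hly, hlK, hlη, hl1⟩ := (pBlock_lower.and (ex.and ey)).exists
  have hup := pBlock_upper y (by linarith)
  set B := pBlock y with hB
  have hBp : ∀ p ∈ B, p.Prime ∧ y/4 < p ∧ (p:ℝ) ≤ y := by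
    intro p hp
    rw [hB, pBlock, Finset.mem_filter, Finset.mem_Ioc] at hp
    refine ⟨hp.2, (Nat.floor_lt (by linarith)).1 hp.1.1, (Nat.le_floor_iff (by linarith)).1 hp.1.2⟩
  set Q : ℝ := ∏ p ∈ B, (p:ℝ) with hQ
  have hQ0 : 0 < Q := Finset.prod_pos fun p hp => by exact_mod_cast (hBp p hp).1.pos
  have hlogQ : Real.log Q = ∑ p ∈ B, Real.log (p:ℝ) :=
    Real.log_prod fun p hp => by exact_mod_cast (hBp p hp).1.ne_zero
  rw [← hlogQ] at hlow hup
  set S := ⌈K * Real.log y⌉₊ with hS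
  have hS1 : K * Real.log y ≤ S := Nat.le_ceil _
  have hS2 : (S:ℝ) ≤ (K+1) * Real.log y := by
    have := Nat.ceil_lt_add_one (show 0 ≤ K * Real.log y by positivity)
    rw [← hS] at this; linarith
  have hy0 : 0 < y := by linarith
  have hQexp : Real.exp (y/4) ≤ Q := (Real.le_log_iff_exp_le hQ0).1 hlow
  have hl0 : 0 < Real.log y := by linarith
  refine ⟨B, S, 4 * M * Q / y, ?_, by positivity, ?_, ?_, ?_⟩
  · intro p hp
    obtain ⟨a, b, c⟩ := hBp p hp
    refine ⟨a, ?_, ?_⟩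
    · have : (S:ℝ) ≤ p := by linarith
      exact_mod_cast this
    · have : 4 * M * Q / y * p / Q = M * (4 * p / y) := by field_simp
      rw [this]
      have : 1 ≤ 4 * (p:ℝ) / y := by rw [le_div_iff₀ hy0]; linarith
      nlinarith
  · rw [div_le_iff₀ hQ0]
    have h4 : y/4 ≤ Q := by linarith [Real.add_one_le_exp (y/4)]
    calc (S:ℝ) ≤ (K+1) * ((η / (4*(K+1))) * y) := by
          refine hS2.trans ?_; gcongr
      _ = η * (y/4) := by field_simp
      _ ≤ η * Q := by gcongr
  · set H := 4 * M * Q / y with hH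
    have hH0 : 0 < H := by positivity
    have hlH : Real.log H = Real.log (4*M) + Real.log Q - Real.log y := by
      rw [hH, Real.log_div (by positivity) (by positivity), Real.log_mul (by positivity) (by positivity)]
    have ab := abs_le.1 (le_refl |Real.log (4*M)|)
    have hH1 : y/8 ≤ Real.log H := by rw [hlH]; linarith
    have hH2 : Real.log H ≤ 3 * y := by rw [hlH]; linarith
    have hHX : X ≤ H := hXy.trans ((Real.le_log_iff_exp_le hH0).1 hH1)
    have hll : Real.log y / 2 ≤ Real.log (Real.log H) := by
      have : Real.log (y/8) ≤ Real.log (Real.log H) := Real.log_le_log (by positivity) hH1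
      refine le_trans ?_ this
      have : Real.log y / 2 = Real.log (√y) := by rw [Real.log_sqrt hy0.le]
      rw [this]
      apply Real.log_le_log (by positivity)
      have h8 : 8 ≤ √y := by rw [Real.le_sqrt (by norm_num) hy0.le]; linarith
      nlinarith [Real.sq_sqrt hy0.le]
    have hx := (hX H hHX).le
    have hlHp : 0 < Real.log H := by linarith
    rw [div_le_iff₀ (by positivity)] at hx
    have hφH : φ H ≤ 6 * δ * H * y / Real.log y := by
      rw [le_div_iff₀ hl0]
      by_cases hn : φ H ≤ 0
      · have : φ H * Real.log y ≤ 0 := mul_nonpos_of_nonpos_of_nonneg hn hl0.le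
        exact this.trans (by positivity)
      push Not at hn
      have : φ H * (Real.log y / 2) ≤ δ * (H * (3*y)) := by
        calc _ ≤ φ H * Real.log (Real.log H) := by gcongr
          _ ≤ _ := hx
          _ ≤ _ := by gcongr
      linarith
    calc φ H * (S / Q) ≤ 6 * δ * H * y / Real.log y * (S/Q) := by gcongr
      _ = 24 * δ * M * (S / Real.log y) := by rw [hH]; field_simp; ring
      _ ≤ 24 * δ * M * (K+1) := by
        gcongr
        rw [div_le_iff₀ hl0]; exact hS2
      _ = η := by rw [hδ]; field_simp
  · have hc : y / 4 ≤ B.card * Real.log y := by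
      refine hlow.trans ?_
      rw [hlogQ, ← nsmul_eq_mul]
      apply Finset.sum_le_card_nsmul
      intro p hp
      exact Real.log_le_log (by exact_mod_cast (hBp p hp).1.pos) (hBp p hp).2.2
    calc ∏ p ∈ B, (1 - (S:ℝ)/p) ≤ ∏ p ∈ B, Real.exp (-(S/y)) := by
          apply Finset.prod_le_prod
          · intro p hp
            obtain ⟨a, b, c⟩ := hBp p hp
            rw [sub_nonneg, div_le_one (by linarith)]; linarith
          · intro p hp
            obtain ⟨a, b, c⟩ := hBp p hp
            have h1 : (S:ℝ)/y ≤ S/p := by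
              have : (0:ℝ) < p := by linarith
              gcongr
            have := Real.add_one_le_exp (-((S:ℝ)/y))
            linarith
      _ = Real.exp (-(B.card * (S/y))) := by
          rw [Finset.prod_const, ← Real.exp_nat_mul]; ring_nf
      _ ≤ Real.exp (-(K/4)) := by
          apply Real.exp_le_exp.2
          have : y * (K/4) ≤ B.card * S := by
            calc y * (K/4) = K * (y/4) := by ring
              _ ≤ K * (B.card * Real.log y) := by gcongr
              _ = B.card * (K * Real.log y) := by ring
              _ ≤ _ := by gcongr
          have h2 : K/4 ≤ B.card * (S/y) := by
            rw [← mul_div_assoc, le_div_iff₀ hy0]; linarith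
          linarith
      _ ≤ η := hKη

lemma exists_w (B : Finset ℕ) (hB : ∀ p ∈ B, p.Prime) :
    ∃ w : ℕ, 0 < w ∧ ∀ p ∈ B, w * ∏ q ∈ B.erase p, q ∈ Eset := by
  classical
  set k := B.sup id + 2 with hk
  set c : ℕ → ℕ := Nat.count Nat.Prime with hc
  have hcn : ∀ p ∈ B, nthPrime (c p) = p := fun p hp => Nat.nth_count (hB p hp)
  have hck : ∀ p ∈ B, c p < k := by
    intro p hp
    have h1 : c p ≤ p := Nat.count_le _
    have h2 : p ≤ B.sup id := Finset.le_sup (f := id) hp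
    omega
  have hinj : Set.InjOn c B := by
    intro p hp q hq h
    rw [← hcn p hp, ← hcn q hq, h]
  refine ⟨∏ i ∈ Finset.range k \ B.image c, nthPrime i, ?_, ?_⟩
  · exact Finset.prod_pos fun i _ => (Nat.prime_nth_prime i).pos
  · intro p hp
    refine ⟨k, by omega, c p, hck p hp, ?_⟩
    have e1 : ∏ q ∈ B.erase p, q = ∏ i ∈ (B.erase p).image c, nthPrime i := by
      rw [Finset.prod_image (fun a ha b hb h => hinj (Finset.mem_of_mem_erase ha)
        (Finset.mem_of_mem_erase hb) h)]
      exact Finset.prod_congr rfl fun q hq => (hcn q (Finset.mem_of_mem_erase hq)).symm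
    rw [e1, ← Finset.prod_union]
    · congr 1
      ext i
      simp only [Finset.mem_union, Finset.mem_sdiff, Finset.mem_range, Finset.mem_image,
        Finset.mem_erase, Finset.mem_singleton]
      constructor
      · rintro (⟨h1, h2⟩ | ⟨q, ⟨h1, h2⟩, rfl⟩)
        · exact ⟨h1, fun h => h2 ⟨p, hp, h.symm⟩⟩
        · exact ⟨hck q h2, fun h => h1 (hinj h2 hp h)⟩
      · rintro ⟨h1, h2⟩
        by_cases h : ∃ a ∈ B, c a = i
        · obtain ⟨q, hq, rfl⟩ := h
          exact Or.inr ⟨q, ⟨fun h => h2 (by rw [h]), hq⟩, rfl⟩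
        · exact Or.inl ⟨h1, h⟩
    · apply Finset.disjoint_of_subset_right (Finset.image_subset_image (Finset.erase_subset p B))
      exact Finset.sdiff_disjoint

lemma card_bad (B : Finset ℕ) (hB : ∀ p ∈ B, p.Prime) (S : ℕ) :
    ((Finset.range (∏ p ∈ B, p)).filter (fun a => ∀ p ∈ B, S ≤ a % p)).card ≤ ∏ p ∈ B, (p - S) := by
  classical
  have : ∏ p ∈ B, (p - S) = (B.pi (fun p => Finset.Ico S p)).card := by
    rw [Finset.card_pi]; simp
  rw [this]
  apply Finset.card_le_card_of_injOn (fun a p _ => a % p)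
  · intro a ha
    simp only [Finset.coe_filter, Finset.mem_range, Set.mem_ofPred_eq] at ha
    simp only [Finset.mem_coe, Finset.mem_pi, Finset.mem_Ico]
    exact fun p hp => ⟨ha.2 p hp, Nat.mod_lt _ (hB p hp).pos⟩
  · intro a ha b hb h
    simp only [Finset.coe_filter, Finset.mem_range, Set.mem_ofPred_eq] at ha hb
    have hd : ∀ p ∈ B, (p:ℤ) ∣ (a:ℤ) - b := by
      intro p hp
      have h1 : a % p = b % p := congrFun (congrFun h p) hp
      exact (Nat.modEq_iff_dvd.1 (show b ≡ a [MOD p] from h1.symm))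
    have h2 : (∏ p ∈ B, (p:ℤ)) ∣ (a:ℤ) - b := by
      apply Finset.prod_dvd_of_coprime _ hd
      intro p hp q hq hpq
      exact Nat.isCoprime_iff_coprime.2 ((Nat.coprime_primes (hB p hp) (hB q hq)).2 hpq)
    rw [← Nat.cast_prod] at h2
    have h3 : b ≡ a [MOD ∏ p ∈ B, p] := Nat.modEq_iff_dvd.2 h2
    exact (Nat.ModEq.eq_of_lt_of_lt h3 hb.1 ha.1).symm

lemma circle_norm_le (t : ℝ) : ‖(t : Circle1)‖ ≤ |t| := by
  have := QuotientAddGroup.norm_mk_le_norm (S := AddSubgroup.zmultiples (1:ℝ)) (m := t)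
  exact this

lemma circle_ball_meas (x : Circle1) (ε : ℝ) : volume (Metric.closedBall x ε) ≤ ENNReal.ofReal (2*ε) := by
  rw [AddCircle.volume_closedBall]
  exact ENNReal.ofReal_le_ofReal (min_le_right _ _)

lemma mp_nsmul (w : ℕ) (hw : 0 < w) : MeasurePreserving (fun x : Circle1 => w • x) volume volume := by
  have := Measure.measurePreserving_zsmul (volume : Measure Circle1) (n := (w:ℤ)) (by exact_mod_cast hw.ne')
  simpa using this

lemma geom (B : Finset ℕ) (hB : ∀ p ∈ B, p.Prime) (S : ℕ) (hS : ∀ p ∈ B, S ≤ p) (H M : ℝ)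
    (hH : 0 < H) (hM : ∀ p ∈ B, M ≤ H * p / ∏ p ∈ B, (p:ℝ)) :
    ∃ A U : Set Circle1, MeasurableSet A ∧ MeasurableSet U ∧
      volume A ≤ ENNReal.ofReal ((S:ℝ) / ∏ p ∈ B, (p:ℝ)) ∧
      volume U ≤ ENNReal.ofReal (∏ p ∈ B, (1 - (S:ℝ)/p)) ∧
      ∀ x ∉ U, ∃ n ∈ Eset, ∀ g : Circle1 → ℝ,
        (∀ k : ℕ, 0 ≤ g (x + (((k : ℝ) / (n : ℝ) : ℝ) : Circle1))) →
        (∀ k : ℕ, x + (((k : ℝ) / (n : ℝ) : ℝ) : Circle1) ∈ A →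
          H ≤ g (x + (((k : ℝ) / (n : ℝ) : ℝ) : Circle1))) →
        M ≤ RiemannSum n g x := by
  classical
  obtain ⟨w, hw, hwE⟩ := exists_w B hB
  set Q : ℕ := ∏ p ∈ B, p with hQ
  have hQ0 : 0 < Q := Finset.prod_pos fun p hp => (hB p hp).pos
  have hQ0' : (0:ℝ) < Q := by exact_mod_cast hQ0
  have hQc : ∏ p ∈ B, (p:ℝ) = Q := by rw [hQ]; push_cast; rfl
  rw [hQc] at hM ⊢
  set bad := (Finset.range Q).filter (fun a => ∀ p ∈ B, S ≤ a % p) with hbad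
  have mp := mp_nsmul w hw
  have mA : MeasurableSet (Metric.closedBall (((S:ℝ)/(2*Q) : ℝ) : Circle1) ((S:ℝ)/(2*Q))) :=
    Metric.isClosed_closedBall.measurableSet
  have mU : MeasurableSet (⋃ a ∈ bad,
      Metric.closedBall ((((a:ℝ)+1/2)/Q : ℝ) : Circle1) (1/(2*Q))) :=
    bad.measurableSet_biUnion fun a _ => Metric.isClosed_closedBall.measurableSet
  refine ⟨_, _, mp.measurable mA, mp.measurable mU, ?_, ?_, ?_⟩
  · rw [mp.measure_preimage mA.nullMeasurableSet]
    refine (circle_ball_meas _ _).trans (le_of_eq ?_)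
    congr 1; field_simp
  · rw [mp.measure_preimage mU.nullMeasurableSet]
    refine (measure_biUnion_finset_le _ _).trans ?_
    refine (Finset.sum_le_sum fun a _ => circle_ball_meas _ _).trans ?_
    rw [Finset.sum_const, ← ENNReal.ofReal_nsmul]
    apply ENNReal.ofReal_le_ofReal
    have h1 : ((bad.card : ℕ) : ℝ) ≤ ∏ p ∈ B, ((p:ℝ) - S) := by
      have : ((bad.card : ℕ) : ℝ) ≤ ((∏ p ∈ B, (p - S) : ℕ) : ℝ) := by
        exact_mod_cast card_bad B hB S
      refine this.trans (le_of_eq ?_)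
      push_cast
      exact Finset.prod_congr rfl fun p hp => by rw [Nat.cast_sub (hS p hp)]
    have h2 : ∏ p ∈ B, (1 - (S:ℝ)/p) = (∏ p ∈ B, ((p:ℝ) - S)) / Q := by
      rw [← hQc, ← Finset.prod_div_distrib]
      refine Finset.prod_congr rfl fun p hp => ?_
      have : (p:ℝ) ≠ 0 := by exact_mod_cast (hB p hp).ne_zero
      field_simp
    rw [h2, nsmul_eq_mul, le_div_iff₀ hQ0']
    refine le_trans (le_of_eq ?_) h1
    field_simp
  · intro x hx
    obtain ⟨t, ht, htx⟩ : ∃ t ∈ Set.Ico (0:ℝ) 1, (t : Circle1) = w • x := by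
      have := AddCircle.coe_image_Ico_eq (1:ℝ) 0
      have h2 : (w • x) ∈ (univ : Set Circle1) := mem_univ _
      rw [← this] at h2
      simpa using h2
    set a := ⌊(Q:ℝ) * t⌋₊ with ha
    have ha1 : (a:ℝ) ≤ Q * t := Nat.floor_le (mul_nonneg hQ0'.le ht.1)
    have ha2 : Q * t < a + 1 := Nat.lt_floor_add_one _
    have haQ : a < Q := by
      rw [ha, Nat.floor_lt (mul_nonneg hQ0'.le ht.1)]
      nlinarith [ht.2]
    have hnb : a ∉ bad := by
      intro hb
      apply hx
      simp only [Set.mem_preimage, Set.mem_iUnion]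
      refine ⟨a, hb, ?_⟩
      rw [← htx, mem_closedBall_iff_norm, ← AddCircle.coe_sub]
      refine (circle_norm_le _).trans ?_
      rw [abs_le]
      constructor
      · have : t - ((a:ℝ)+1/2)/Q + 1/(2*Q) = (Q*t - a)/Q := by field_simp; ring
        have h2 : 0 ≤ (Q*t - a)/Q := div_nonneg (by linarith) hQ0'.le
        linarith
      · have : 1/(2*Q) - (t - ((a:ℝ)+1/2)/Q) = (a + 1 - Q*t)/Q := by field_simp; ring
        have h2 : 0 ≤ (a + 1 - Q*t)/Q := div_nonneg (by linarith) hQ0'.le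
        linarith
    obtain ⟨p, hp, hpS⟩ : ∃ p ∈ B, a % p < S := by
      by_contra! h
      exact hnb (Finset.mem_filter.2 ⟨Finset.mem_range.2 haQ, h⟩)
    set d := ∏ q ∈ B.erase p, q with hd
    have hQd : p * d = Q := Finset.mul_prod_erase B (fun q => q) hp
    have hp0 := (hB p hp).pos
    have hd0 : 0 < d := Nat.pos_of_ne_zero (by rintro h; rw [h] at hQd; omega)
    refine ⟨w * d, hwE p hp, ?_⟩
    intro g hg0 hgA
    set q := a / p with hq
    have hqd : q < d := by rw [hq, Nat.div_lt_iff_lt_mul hp0, mul_comm, hQd]; exact haQ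
    have haq : p * q + a % p = a := Nat.div_add_mod a p
    obtain ⟨l, hl, z, hlz⟩ : ∃ l < d, ∃ z : ℤ, (l:ℝ) = -q + z * d := by
      rcases Nat.eq_zero_or_pos q with h | h
      · exact ⟨0, hd0, 0, by rw [h]; simp⟩
      · exact ⟨d - q, by omega, 1, by rw [Nat.cast_sub hqd.le]; push_cast; ring⟩
    have hd0' : (0:ℝ) < d := by exact_mod_cast hd0
    have hw0' : (0:ℝ) < w := by exact_mod_cast hw
    have hQd' : (p:ℝ) * d = Q := by exact_mod_cast hQd
    have hp0' : (0:ℝ) < p := by exact_mod_cast hp0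
    have key : ∀ i : ℕ, H ≤ g (x + ((((l + d * i : ℕ) : ℝ) / ((w * d : ℕ) : ℝ) : ℝ) : Circle1)) := by
      intro i
      apply hgA
      simp only [Set.mem_preimage]
      rw [smul_add, ← htx, ← AddCircle.coe_nsmul, ← AddCircle.coe_add]
      have e : t + w • (((l + d * i : ℕ) : ℝ) / ((w * d : ℕ) : ℝ)) = (t - q/d) + ((z + i : ℤ) : ℝ) := by
        push_cast
        rw [nsmul_eq_mul, hlz]
        field_simp
        ring
      have e1 : (((z + i : ℤ) : ℝ) : Circle1) = 0 := by
        rw [AddCircle.coe_eq_zero_iff]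
        exact ⟨z + i, by simp⟩
      rw [e, AddCircle.coe_add, e1, add_zero, mem_closedBall_iff_norm, ← AddCircle.coe_sub]
      refine (circle_norm_le _).trans ?_
      have haq' : (p:ℝ) * q + (a % p : ℕ) = a := by exact_mod_cast haq
      have hpS' : ((a % p : ℕ) : ℝ) + 1 ≤ S := by exact_mod_cast hpS
      have hm0 : (0:ℝ) ≤ ((a % p : ℕ) : ℝ) := Nat.cast_nonneg _
      have eq1 : (q:ℝ)/d = p * q / Q := by rw [← hQd']; field_simp
      rw [eq1, abs_le]
      constructor
      · have : t - p*q/Q - S/(2*Q) + S/(2*Q) = (Q*t - p*q)/Q := by field_simp; ring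
        have h2 : 0 ≤ (Q*t - p*q)/Q := div_nonneg (by linarith) hQ0'.le
        linarith
      · have : S/(2*Q) - (t - p*q/Q - S/(2*Q)) = (S + p*q - Q*t)/Q := by field_simp; ring
        have h2 : 0 ≤ (S + p*q - Q*t)/Q := div_nonneg (by linarith) hQ0'.le
        linarith
    unfold RiemannSum
    have hinj : Function.Injective (fun i : ℕ => l + d * i) := by
      intro i j h
      have : d * i = d * j := by simpa using h
      exact Nat.eq_of_mul_eq_mul_left hd0 this
    have hsub : (Finset.range w).image (fun i => l + d * i) ⊆ Finset.range (w * d) := by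
      intro k hk
      simp only [Finset.mem_image, Finset.mem_range] at hk ⊢
      obtain ⟨i, hi, rfl⟩ := hk
      nlinarith
    have hsum : (w:ℝ) * H ≤ ∑ k ∈ Finset.range (w*d), g (x + (((k : ℝ) / ((w*d : ℕ) : ℝ) : ℝ) : Circle1)) := by
      refine le_trans ?_ (Finset.sum_le_sum_of_subset_of_nonneg hsub fun k _ _ => hg0 k)
      rw [Finset.sum_image (fun i _ j _ h => hinj h)]
      have := Finset.card_nsmul_le_sum (Finset.range w) _ H (fun i _ => key i)
      simpa [nsmul_eq_mul] using this
    calc M ≤ H * p / Q := hM p hp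
      _ = ((w * d : ℕ) : ℝ)⁻¹ * (w * H) := by
        rw [← hQd']; push_cast; field_simp
      _ ≤ _ := by gcongr

lemma Eset_large (C : ℕ) : ∃ n ∈ Eset, C ≤ n := by
  refine ⟨∏ i ∈ Finset.range (C+2) \ {0}, nthPrime i, ⟨C+2, by omega, 0, by omega, rfl⟩, ?_⟩
  have h := Finset.pow_card_le_prod (Finset.range (C+2) \ {0}) nthPrime 2
    (fun i _ => (Nat.prime_nth_prime i).two_le)
  have hc : (Finset.range (C+2) \ {0}).card = C + 1 := by
    rw [Finset.card_sdiff_of_subset (by simp)]; simp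
  rw [hc] at h
  have h2 : C + 1 < 2^(C+1) := Nat.lt_two_pow_self
  exact (Nat.le_succ C).trans (h2.le.trans h)

lemma blowup (x : Circle1) (C : ℝ) : ∃ n ∈ Eset, ∀ g : Circle1 → ℝ,
    (∀ k : ℕ, g (x + (((k : ℝ) / (n : ℝ) : ℝ) : Circle1)) =
      (‖x + (((k : ℝ) / (n : ℝ) : ℝ) : Circle1)‖ ^ 2)⁻¹) → C ≤ RiemannSum n g x := by
  obtain ⟨n, hnE, hn⟩ := Eset_large (⌈C⌉₊ + 2)
  refine ⟨n, hnE, fun g hg => ?_⟩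
  have hC : C ≤ n := (Nat.le_ceil C).trans (by exact_mod_cast (by omega : ⌈C⌉₊ ≤ n))
  have hn2 : 2 ≤ n := by omega
  have hn0 : (0:ℝ) < n := by exact_mod_cast (by omega : 0 < n)
  have hn2' : (2:ℝ) ≤ n := by exact_mod_cast hn2
  obtain ⟨t, ht, htx⟩ : ∃ t ∈ Set.Ioc (0:ℝ) 1, (t : Circle1) = x := by
    have := AddCircle.coe_image_Ioc_eq (1:ℝ) 0
    have h2 : x ∈ (univ : Set Circle1) := mem_univ _
    rw [← this] at h2
    simpa using h2
  obtain ⟨a, ha⟩ : ∃ a : ℕ, a + 1 = ⌈(n:ℝ) * t⌉₊ := by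
    have : 0 < ⌈(n:ℝ) * t⌉₊ := Nat.ceil_pos.2 (mul_pos hn0 ht.1)
    exact ⟨⌈(n:ℝ) * t⌉₊ - 1, by omega⟩
  have h1 : n * t ≤ a + 1 := by
    have := Nat.le_ceil ((n:ℝ) * t)
    rw [← ha] at this; exact_mod_cast this
  have h2 : (a:ℝ) < n * t := by
    have := Nat.ceil_lt_add_one (mul_pos hn0 ht.1).le
    rw [← ha] at this; push_cast at this; linarith
  have han : a < n := by
    have : (a:ℝ) < n := by nlinarith [ht.2]
    exact_mod_cast this
  obtain ⟨l, hl, z, hlz⟩ : ∃ l < n, ∃ z : ℤ, (l:ℝ) = -a + z * n := by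
    rcases Nat.eq_zero_or_pos a with h | h
    · exact ⟨0, by omega, 0, by rw [h]; simp⟩
    · exact ⟨n - a, by omega, 1, by rw [Nat.cast_sub han.le]; push_cast; ring⟩
  have e : x + (((l : ℝ) / (n : ℝ) : ℝ) : Circle1) = ((t - a/n : ℝ) : Circle1) := by
    have e1 : ((z : ℝ) : Circle1) = 0 := by
      rw [AddCircle.coe_eq_zero_iff]
      exact ⟨z, by simp⟩
    have e2 : t + (l:ℝ)/n = (t - a/n) + z := by rw [hlz]; field_simp; ring
    rw [← htx, ← AddCircle.coe_add, e2, AddCircle.coe_add, e1, add_zero]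
  have hs : t - a/n = (n*t - a)/n := by field_simp
  have hs0 : 0 < t - a/n := by rw [hs]; exact div_pos (by linarith) hn0
  have hs1 : t - a/n ≤ 1/n := by rw [hs]; gcongr; linarith
  have hs2 : (1:ℝ)/n < 1 := by rw [div_lt_one hn0]; linarith
  have hpos : 0 < ‖((t - a/n : ℝ) : Circle1)‖ := by
    rw [norm_pos_iff]
    intro h0
    rw [AddCircle.coe_eq_zero_iff] at h0
    obtain ⟨m, hm⟩ := h0
    simp only [zsmul_eq_mul, mul_one] at hm
    have m0 : (0:ℝ) < m := by linarith
    have m1 : (m:ℝ) < 1 := by linarith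
    have m0' : 0 < m := by exact_mod_cast m0
    have m1' : m < 1 := by exact_mod_cast m1
    omega
  have hle : ‖((t - a/n : ℝ) : Circle1)‖ ≤ 1/n :=
    (circle_norm_le _).trans (by rw [abs_of_pos hs0]; exact hs1)
  have hterm : (n:ℝ)^2 ≤ g (x + (((l : ℝ) / (n : ℝ) : ℝ) : Circle1)) := by
    rw [hg, e, le_inv_comm₀ (by positivity) (by positivity)]
    calc _ ≤ (1/(n:ℝ))^2 := by gcongr
      _ = _ := by simp
  unfold RiemannSum
  have hsum := Finset.single_le_sum (s := Finset.range n)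
    (f := fun k : ℕ => g (x + (((k : ℝ) / (n : ℝ) : ℝ) : Circle1)))
    (fun k _ => by rw [hg]; positivity) (Finset.mem_range.2 hl)
  calc C ≤ n := hC
    _ = (n:ℝ)⁻¹ * (n:ℝ)^2 := by field_simp
    _ ≤ _ := by gcongr; exact hterm.trans hsum

lemma stage (φ : ℝ → ℝ) (hφpos : ∀ x ≥ (0:ℝ), 0 ≤ φ x)
    (hφ : Tendsto (fun x : ℝ => φ x * Real.log (Real.log x) / (x * Real.log x))
      atTop (nhds 0)) (M η : ℝ) (hM : 0 < M) (hη : 0 < η) :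
    ∃ (A U : Set Circle1) (H : ℝ), MeasurableSet A ∧ MeasurableSet U ∧ 0 < H ∧
      volume A ≤ ENNReal.ofReal η ∧ volume U ≤ ENNReal.ofReal η ∧
      ENNReal.ofReal (φ H) * volume A ≤ ENNReal.ofReal η ∧
      ∀ x ∉ U, ∃ n ∈ Eset, ∀ g : Circle1 → ℝ,
        (∀ k : ℕ, 0 ≤ g (x + (((k : ℝ) / (n : ℝ) : ℝ) : Circle1))) →
        (∀ k : ℕ, x + (((k : ℝ) / (n : ℝ) : ℝ) : Circle1) ∈ A →
          H ≤ g (x + (((k : ℝ) / (n : ℝ) : ℝ) : Circle1))) →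
        M ≤ RiemannSum n g x := by
  obtain ⟨B, S, H, hB, hH, h1, h2, h3⟩ := analytic φ hφ M η hM hη
  obtain ⟨A, U, mA, mU, vA, vU, h⟩ := geom B (fun p hp => (hB p hp).1) S (fun p hp => (hB p hp).2.1)
    H M hH (fun p hp => (hB p hp).2.2)
  refine ⟨A, U, H, mA, mU, hH, vA.trans (ENNReal.ofReal_le_ofReal h1),
    vU.trans (ENNReal.ofReal_le_ofReal h3), ?_, h⟩
  calc _ ≤ ENNReal.ofReal (φ H) * ENNReal.ofReal ((S:ℝ) / ∏ p ∈ B, (p:ℝ)) := by gcongr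
    _ = ENNReal.ofReal (φ H * ((S:ℝ) / ∏ p ∈ B, (p:ℝ))) :=
      (ENNReal.ofReal_mul (hφpos H hH.le)).symm
    _ ≤ _ := ENNReal.ofReal_le_ofReal h2

lemma not_tendsto_of_unbdd (f : Circle1 → ℝ) (x : Circle1)
    (h : ∀ C : ℝ, ∃ n ∈ Eset, C ≤ RiemannSum n f x) :
    ¬ ∃ c : ℝ, Tendsto (fun k => RiemannSum (Nat.nth (· ∈ Eset) k) f x) atTop (nhds c) := by
  rintro ⟨c, hc⟩
  obtain ⟨C, hC⟩ := hc.bddAbove_range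
  obtain ⟨n, hn, hle⟩ := h (C + 1)
  obtain ⟨k, hk⟩ := Nat.subset_range_nth (p := (· ∈ Eset)) hn
  have := hC ⟨k, rfl⟩
  simp only [hk] at this
  linarith

/-- **Sharpness for the set `E` (Theorem 3).** Let `(n_k)` be the increasing enumeration
of `E`. If an increasing `φ : ℝ⁺ → ℝ⁺` satisfies `φ(x)·ln ln x/(x ln x) → 0`, then there
is `f ∈ L^φ(𝕋)` whose Riemann sums `R_{n_k} f(x)` diverge at every `x`. -/
theorem exists_Lphi_function_riemannSums_diverge_everywhere_Eset
    (φ : ℝ → ℝ) (hφmono : MonotoneOn φ (Set.Ici 0)) (hφpos : ∀ x ≥ (0:ℝ), 0 ≤ φ x)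
    (hφ : Tendsto (fun x : ℝ => φ x * Real.log (Real.log x) / (x * Real.log x))
      atTop (nhds 0)) :
    ∃ f : Circle1 → ℝ, Measurable f ∧
      (∫⁻ x, ENNReal.ofReal (φ |f x|)) < ⊤ ∧
      ∀ x : Circle1, ¬ ∃ c : ℝ,
        Tendsto (fun k => RiemannSum (Nat.nth (· ∈ Eset) k) f x) atTop (nhds c) := by
  have hst := fun m : ℕ => stage φ hφpos hφ ((m:ℝ)+1) ((1/2:ℝ)^m) (by positivity) (by positivity)
  choose A U H mA mU hH vA vU hc hcov using hst
  have hgeo : ∑' m : ℕ, ENNReal.ofReal ((1/2:ℝ)^m) ≠ ⊤ := by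
    rw [← ENNReal.ofReal_tsum_of_nonneg (fun m => by positivity) summable_geometric_two]
    exact ENNReal.ofReal_ne_top
  have hsA : ∑' m, volume (A m) ≠ ⊤ := ne_top_of_le_ne_top hgeo (ENNReal.tsum_le_tsum vA)
  have hsU : ∑' m, volume (U m) ≠ ⊤ := ne_top_of_le_ne_top hgeo (ENNReal.tsum_le_tsum vU)
  have hae : ∀ᵐ x : Circle1, (∀ᶠ m in atTop, x ∉ A m) ∧ (∀ᶠ m in atTop, x ∉ U m) :=
    (ae_eventually_notMem hsA).and (ae_eventually_notMem hsU)
  set Z : Set Circle1 := toMeasurable volume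
    {x : Circle1 | (∀ᶠ m in atTop, x ∉ A m) ∧ (∀ᶠ m in atTop, x ∉ U m)}ᶜ with hZ
  have mZ : MeasurableSet Z := measurableSet_toMeasurable _ _
  have vZ : volume Z = 0 := by rw [hZ, measure_toMeasurable]; exact hae
  have hZs : ∀ x ∉ Z, (∀ᶠ m in atTop, x ∉ A m) ∧ (∀ᶠ m in atTop, x ∉ U m) := by
    intro x hx
    by_contra h
    exact hx (subset_toMeasurable _ _ h)
  set N : Set Circle1 := ⋃ q : ℚ, (fun x : Circle1 => x + ((q:ℝ) : Circle1)) ⁻¹' Z with hN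
  have mN : MeasurableSet N := MeasurableSet.iUnion fun q => (measurable_add_const _) mZ
  have vN : volume N = 0 := by
    rw [hN, measure_iUnion_null_iff]
    intro q
    rw [measure_preimage_add_right]; exact vZ
  have hNinv : ∀ (x : Circle1) (k n : ℕ),
      x + (((k : ℝ) / (n : ℝ) : ℝ) : Circle1) ∈ N ↔ x ∈ N := by
    intro x k n
    simp only [hN, mem_iUnion, mem_preimage]
    constructor
    · rintro ⟨q, hq⟩
      refine ⟨(k:ℚ)/n + q, ?_⟩
      rw [add_assoc, ← AddCircle.coe_add] at hq
      push_cast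
      exact hq
    · rintro ⟨q, hq⟩
      refine ⟨q - (k:ℚ)/n, ?_⟩
      rw [add_assoc, ← AddCircle.coe_add]
      push_cast
      rw [add_sub_cancel]
      exact hq
  have hNZ : ∀ x ∉ N, x ∉ Z := by
    intro x hx hz
    apply hx
    simp only [hN, mem_iUnion, mem_preimage]
    exact ⟨0, by simpa using hz⟩
  set F : ℕ → Circle1 → ℝ := fun m => (A m).indicator (fun _ => H m) with hF
  set f0 : Circle1 → ℝ := fun x => ⨆ m, F m x with hf0
  have mf0 : Measurable f0 := Measurable.iSup fun m => measurable_const.indicator (mA m)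
  have hfin : ∀ x ∉ N, (range fun m => F m x).Finite := by
    intro x hx
    obtain ⟨m0, hm0⟩ := eventually_atTop.1 (hZs x (hNZ x hx)).1
    apply ((Set.finite_Iio m0).image (fun m => F m x)).insert 0 |>.subset
    rintro _ ⟨m, rfl⟩
    by_cases h : m < m0
    · exact Or.inr ⟨m, h, rfl⟩
    · exact Or.inl (Set.indicator_of_notMem (hm0 m (by omega)) _)
  have hF0 : ∀ m x, 0 ≤ F m x := fun m x => Set.indicator_nonneg (fun _ _ => (hH m).le) x
  have hle : ∀ x ∉ N, ∀ m, F m x ≤ f0 x := fun x hx m => le_ciSup (hfin x hx).bddAbove m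
  have hatt : ∀ x ∉ N, ∃ m, F m x = f0 x := by
    intro x hx
    exact (range_nonempty (fun m => F m x)).csSup_mem (hfin x hx)
  classical
  refine ⟨N.piecewise (fun x => (‖x‖^2)⁻¹) f0,
    Measurable.piecewise mN (by fun_prop) mf0, ?_, ?_⟩
  · have hbound : ∀ᵐ x : Circle1, ENNReal.ofReal (φ |N.piecewise (fun x => (‖x‖^2)⁻¹) f0 x|) ≤
        ENNReal.ofReal (φ 0) + ∑' m, (A m).indicator (fun _ => ENNReal.ofReal (φ (H m))) x := by
      have : ∀ᵐ x : Circle1, x ∉ N := measure_eq_zero_iff_ae_notMem.1 vN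
      filter_upwards [this] with x hx
      rw [Set.piecewise_eq_of_notMem _ _ _ hx]
      obtain ⟨m, hm⟩ := hatt x hx
      rw [← hm, abs_of_nonneg (hF0 m x)]
      by_cases h : x ∈ A m
      · have e1 : F m x = H m := Set.indicator_of_mem h _
        rw [e1]
        refine le_trans ?_ le_add_self
        refine le_trans ?_ (ENNReal.le_tsum m)
        rw [Set.indicator_of_mem h]
      · have e1 : F m x = 0 := Set.indicator_of_notMem h _
        rw [e1]
        exact le_self_add
    refine (lintegral_mono_ae hbound).trans_lt ?_
    rw [lintegral_add_left measurable_const,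
      lintegral_tsum (fun m => (measurable_const.indicator (mA m)).aemeasurable)]
    refine ENNReal.add_lt_top.2 ⟨?_, ?_⟩
    · rw [lintegral_const]
      exact ENNReal.mul_lt_top ENNReal.ofReal_lt_top (measure_lt_top _ _)
    · refine lt_of_le_of_lt (ENNReal.tsum_le_tsum fun m => ?_) hgeo.lt_top
      rw [lintegral_indicator_const (mA m)]
      exact hc m
  · intro x
    apply not_tendsto_of_unbdd
    intro C
    by_cases hx : x ∈ N
    · obtain ⟨n, hn, h⟩ := blowup x C
      refine ⟨n, hn, h _ fun k => ?_⟩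
      rw [Set.piecewise_eq_of_mem _ _ _ ((hNinv x k n).2 hx)]
    · obtain ⟨m, hmU, hmC⟩ := ((hZs x (hNZ x hx)).2.and (eventually_ge_atTop ⌈C⌉₊)).exists
      obtain ⟨n, hn, h⟩ := hcov m x hmU
      refine ⟨n, hn, le_trans ?_ (h _ ?_ ?_)⟩
      · have h1 := Nat.le_ceil C
        have h2 : ((⌈C⌉₊ : ℕ) : ℝ) ≤ m := by exact_mod_cast hmC
        linarith
      · intro k
        have hk := mt (hNinv x k n).1 hx
        rw [Set.piecewise_eq_of_notMem _ _ _ hk]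
        exact (hF0 m _).trans (hle _ hk m)
      · intro k hkA
        have hk := mt (hNinv x k n).1 hx
        rw [Set.piecewise_eq_of_notMem _ _ _ hk]
        refine le_trans (le_of_eq ?_) (hle _ hk m)
        simp only [hF]
        rw [Set.indicator_of_mem hkA]
end

section
/- Fix d ≥ 1. Any collection Θ = {A_α} of rectangles from 𝓕_d contains a finite subcollection {Ã_1, …, Ã_m} such that λ(⋃_α A_α) ≤ 5·λ(⋃_{j=1}^m Ã_j) and ∫_{𝕋^∞} Ψ( (1/3) ∑_{j=1}^m 𝟙_{Ã_j}(x) ) dλ(x) ≤ C for an absolute constant C > 0. -/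
open MeasureTheory Set

/-- The infinite torus `𝕋^∞ = ∏_{k=1}^∞ 𝕋`. -/
abbrev Tinf := ℕ → Circle1

/-- The arc `[a, b) ⊆ 𝕋`. -/
def circleIco (a b : ℝ) : Set Circle1 := (fun r : ℝ => (r : Circle1)) '' Set.Ico a b

/-- `μ` is the product Lebesgue probability measure on `𝕋^∞`. -/
def IsProductLebesgue (μ : Measure Tinf) : Prop :=
  IsProbabilityMeasure μ ∧
    ∀ (s : Finset ℕ) (A : ℕ → Set Circle1), (∀ i, MeasurableSet (A i)) →
      μ {x | ∀ i ∈ s, x i ∈ A i} = ∏ i ∈ s, volume (A i)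

/-- The family `𝓕_d` of rectangles `B_m(j_1,…,j_d)` with `m ∈ E_d`, i.e. rectangles whose
constrained coordinates (with side `1/p_k`) are indexed by `{ν} ∪ {μ, μ+1, …, d}` for some
`1 ≤ ν < μ ≤ d+1` (here written 0-indexed: `{ν} ∪ [μ, d)` with `ν < μ ≤ d`). -/
noncomputable def Fd (d : ℕ) : Set (Set Tinf) :=
  {B | ∃ ν mu : ℕ, ν < mu ∧ mu ≤ d ∧ ∃ j : ℕ → ℕ, (∀ k, j k < nthPrime k) ∧
    B = {x | ∀ k : ℕ, (k = ν ∨ (mu ≤ k ∧ k < d)) →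
      x k ∈ circleIco ((j k : ℝ) / (nthPrime k : ℝ)) (((j k : ℝ) + 1) / (nthPrime k : ℝ))}}

/-- `α(x) = x^{x-1}` for `x > 1` and `α(x) = x` for `x ≤ 1`. -/
noncomputable def alphaFn (x : ℝ) : ℝ := if 1 < x then x ^ (x - 1) else x

/-- `Ψ(x) = ∫_0^{|x|} α(t) dt`. -/
noncomputable def PsiFn (x : ℝ) : ℝ := ∫ t in (0:ℝ)..|x|, alphaFn t


section CoveringAux
open Finset Function

/-- Average over the coordinates `< n`, the remaining ones being those of `ω`. -/
noncomputable def Eav (p : ℕ → ℕ) : ℕ → ((ℕ → ℕ) → ℝ) → (ℕ → ℕ) → ℝ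
  | 0, f, ω => f ω
  | n + 1, f, ω => (∑ a ∈ Finset.range (p n), Eav p n f (Function.update ω n a)) / p n

/-- number of slabs containing `η` -/
def NS (S : ℕ → Finset ℕ) (n : ℕ) (η : ℕ → ℕ) : ℕ :=
  ((Finset.range n).filter (fun ν => η ν ∈ S ν)).card

/-- total slab mass -/
noncomputable def cS (p : ℕ → ℕ) (S : ℕ → Finset ℕ) (n : ℕ) : ℝ :=
  ∑ ν ∈ Finset.range n, ((S ν).card : ℝ) / p ν

lemma cS_nonneg (p : ℕ → ℕ) (S : ℕ → Finset ℕ) (n : ℕ) : 0 ≤ cS p S n :=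
  Finset.sum_nonneg (fun _ _ => by positivity)

lemma cS_succ (p : ℕ → ℕ) (S : ℕ → Finset ℕ) (n : ℕ) :
    cS p S (n+1) = cS p S n + ((S n).card : ℝ) / p n := Finset.sum_range_succ _ _

lemma NS_succ (S : ℕ → Finset ℕ) (n : ℕ) (η : ℕ → ℕ) :
    NS S (n+1) η = NS S n η + if η n ∈ S n then 1 else 0 := by
  unfold NS
  simp only [Finset.card_filter, Finset.sum_range_succ]

lemma NS_le (S : ℕ → Finset ℕ) (n : ℕ) (η : ℕ → ℕ) : NS S n η ≤ n := by
  unfold NS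
  exact (Finset.card_filter_le _ _).trans (by simp)

lemma Eav_mono (p : ℕ → ℕ) (n : ℕ) (f g : (ℕ → ℕ) → ℝ) (ω : ℕ → ℕ)
    (h : ∀ η : ℕ → ℕ, (∀ k, n ≤ k → η k = ω k) → f η ≤ g η) :
    Eav p n f ω ≤ Eav p n g ω := by
  induction n generalizing ω with
  | zero => exact h ω (fun _ _ => rfl)
  | succ n ih =>
    simp only [Eav]
    gcongr with a ha
    apply ih
    intro η hη
    apply h
    intro k hk
    rw [hη k (by omega), Function.update_of_ne (by omega)]

lemma Eav_add (p : ℕ → ℕ) (n : ℕ) (f g : (ℕ → ℕ) → ℝ) (ω : ℕ → ℕ) :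
    Eav p n (fun η => f η + g η) ω = Eav p n f ω + Eav p n g ω := by
  induction n generalizing ω with
  | zero => rfl
  | succ n ih => simp only [Eav, ih, Finset.sum_add_distrib, add_div]

lemma Eav_smul (p : ℕ → ℕ) (n : ℕ) (c : ℝ) (f : (ℕ → ℕ) → ℝ) (ω : ℕ → ℕ) :
    Eav p n (fun η => c * f η) ω = c * Eav p n f ω := by
  induction n generalizing ω with
  | zero => rfl
  | succ n ih => simp only [Eav, ih, ← Finset.mul_sum, mul_div_assoc]

lemma Eav_const (p : ℕ → ℕ) (hp : ∀ k, 0 < p k) (n : ℕ) (c : ℝ) (ω : ℕ → ℕ) :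
    Eav p n (fun _ => c) ω = c := by
  induction n generalizing ω with
  | zero => rfl
  | succ n ih =>
    have : (p n : ℝ) ≠ 0 := by exact_mod_cast (hp n).ne'
    simp only [Eav, ih, Finset.sum_const, Finset.card_range, nsmul_eq_mul]
    field_simp

lemma Eav_sum (p : ℕ → ℕ) (hp : ∀ k, 0 < p k) (n : ℕ) (f : ℕ → (ℕ → ℕ) → ℝ) (ω : ℕ → ℕ) (m : ℕ) :
    Eav p n (fun η => ∑ k ∈ Finset.range m, f k η) ω = ∑ k ∈ Finset.range m, Eav p n (f k) ω := by
  induction m with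
  | zero => simp [Eav_const p hp]
  | succ m ih => simp only [Finset.sum_range_succ, Eav_add, ih]

lemma pow_aux (c s : ℝ) (hc : 0 ≤ c) (hs : 0 ≤ s) (k : ℕ) :
    c ^ (k+1) + s * ((k+1 : ℕ) * c ^ k) ≤ (c + s) ^ (k+1) := by
  induction k with
  | zero => simp
  | succ k ih =>
    have h1 : (c + s) ^ (k+1+1) = (c+s)^(k+1) * (c+s) := pow_succ _ _
    have h2 := mul_le_mul_of_nonneg_right ih (add_nonneg hc hs)
    have h3 : 0 ≤ s * s * ((k+1 : ℕ) * c ^ k) := by positivity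
    rw [h1]
    refine le_trans ?_ h2
    push_cast at h3 ⊢
    ring_nf at h3 ⊢
    linarith

lemma sum_ite_card (S : Finset ℕ) (m : ℕ) (x : ℝ) (hx : 0 ≤ x) :
    ∑ a ∈ Finset.range m, (if a ∈ S then x else 0) ≤ S.card * x := by
  rw [← Finset.sum_filter, Finset.sum_const, nsmul_eq_mul]
  gcongr
  intro a ha
  exact (Finset.mem_filter.1 ha).2

lemma sum_ite_card_eq (S : Finset ℕ) (m : ℕ) (hS : S ⊆ Finset.range m) (x : ℝ) :
    ∑ a ∈ Finset.range m, (if a ∈ S then x else 0) = S.card * x := by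
  rw [← Finset.sum_filter, Finset.sum_const, nsmul_eq_mul, Finset.filter_mem_eq_inter,
    Finset.inter_eq_right.2 hS]

lemma Eav_desc (p : ℕ → ℕ) (hp : ∀ k, 0 < p k) (S : ℕ → Finset ℕ) (n k : ℕ) (ω : ℕ → ℕ) :
    Eav p n (fun η => ((NS S n η).descFactorial k : ℝ)) ω ≤ cS p S n ^ k := by
  induction n generalizing ω k with
  | zero =>
    cases k <;> simp [Eav, NS, cS]
  | succ n ih =>
    cases k with
    | zero => simp [Eav_const p hp]
    | succ k =>
    have hpn : (0 : ℝ) < p n := by exact_mod_cast hp n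
    rw [cS_succ]
    refine le_trans ?_ (pow_aux _ _ (cS_nonneg p S n) (by positivity) k)
    simp only [Eav]
    rw [div_le_iff₀ hpn]
    have key : ∀ a ∈ Finset.range (p n),
        Eav p n (fun η => ((NS S (n+1) η).descFactorial (k+1) : ℝ)) (Function.update ω n a) ≤
        cS p S n ^ (k+1) + if a ∈ S n then ((k+1 : ℕ) * cS p S n ^ k) else 0 := by
      intro a _
      by_cases ha : a ∈ S n
      · rw [if_pos ha]
        have h1 := ih (k+1) (Function.update ω n a)
        have h2 := mul_le_mul_of_nonneg_left (ih k (Function.update ω n a))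
          (Nat.cast_nonneg (α := ℝ) (k+1))
        rw [← Eav_smul] at h2
        refine le_trans ?_ (add_le_add h1 h2)
        rw [← Eav_add]
        apply Eav_mono
        intro η hη
        have : η n = a := by rw [hη n le_rfl]; simp
        rw [NS_succ, this, if_pos ha]
        have := Nat.succ_descFactorial_succ
        have h3 : (NS S n η + 1).descFactorial (k+1) =
          (NS S n η).descFactorial (k+1) + (k+1) * (NS S n η).descFactorial k := by
          rw [Nat.succ_descFactorial_succ, Nat.descFactorial_succ]
          by_cases hk : k ≤ NS S n η
          · rw [← add_mul]; congr 1; omega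
          · rw [Nat.descFactorial_of_lt (by omega)]; simp
        rw [h3]; push_cast; exact le_rfl
      · rw [if_neg ha, add_zero]
        refine le_trans ?_ (ih (k+1) (Function.update ω n a))
        apply Eav_mono
        intro η hη
        have : η n = a := by rw [hη n le_rfl]; simp
        rw [NS_succ, this, if_neg ha, add_zero]
    refine (Finset.sum_le_sum key).trans ?_
    rw [Finset.sum_add_distrib, Finset.sum_const, Finset.card_range, nsmul_eq_mul]
    have := sum_ite_card (S n) (p n) ((k+1 : ℕ) * cS p S n ^ k)
      (mul_nonneg (Nat.cast_nonneg _) (pow_nonneg (cS_nonneg p S n) _))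
    rw [add_mul]
    have e : ((S n).card : ℝ) / p n * ((k+1 : ℕ) * cS p S n ^ k) * p n =
      (S n).card * ((k+1 : ℕ) * cS p S n ^ k) := by field_simp
    rw [e]
    linarith [mul_comm (p n : ℝ) (cS p S n ^ (k+1))]

lemma Eav_fact (p : ℕ → ℕ) (hp : ∀ k, 0 < p k) (S : ℕ → Finset ℕ) (n : ℕ) (ω : ℕ → ℕ)
    (hc : cS p S n ≤ 1/4) :
    Eav p n (fun η => ((NS S n η).factorial : ℝ)) ω ≤ 2 := by
  have h1 : Eav p n (fun η => ((NS S n η).factorial : ℝ)) ω ≤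
      Eav p n (fun η => ∑ k ∈ Finset.range (n+1), ((NS S n η).descFactorial k : ℝ)) ω := by
    apply Eav_mono
    intro η _
    rw [← Nat.descFactorial_self]
    exact Finset.single_le_sum (f := fun k => ((NS S n η).descFactorial k : ℝ))
      (fun _ _ => Nat.cast_nonneg _) (Finset.mem_range.2 (Nat.lt_succ_of_le (NS_le S n η)))
  refine h1.trans ?_
  rw [Eav_sum p hp]
  have h2 : ∀ k ∈ Finset.range (n+1), Eav p n (fun η => ((NS S n η).descFactorial k : ℝ)) ω
      ≤ (1/2 : ℝ)^k := fun k _ => (Eav_desc p hp S n k ω).trans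
        (pow_le_pow_left₀ (cS_nonneg p S n) (by linarith) k)
  refine (Finset.sum_le_sum h2).trans ?_
  exact sum_geometric_two_le _

open Classical in
lemma Eav_cover (p : ℕ → ℕ) (hp : ∀ k, 0 < p k) (S : ℕ → Finset ℕ)
    (hS : ∀ k, S k ⊆ Finset.range (p k)) (n : ℕ) (ω : ℕ → ℕ) :
    cS p S n / (1 + cS p S n) ≤ Eav p n (fun η => if 0 < NS S n η then (1:ℝ) else 0) ω := by
  induction n generalizing ω with
  | zero => simp [cS, Eav, NS]
  | succ n ih =>
    have hpn : (0 : ℝ) < p n := by exact_mod_cast hp n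
    have hc := cS_nonneg p S n
    set c := cS p S n with hcdef
    have key : ∀ a ∈ Finset.range (p n), (c/(1+c) + if a ∈ S n then 1/(1+c) else 0) ≤
        Eav p n (fun η => if 0 < NS S (n+1) η then (1:ℝ) else 0) (Function.update ω n a) := by
      intro a _
      by_cases ha : a ∈ S n
      · rw [if_pos ha]
        have : c/(1+c) + 1/(1+c) = 1 := by field_simp; ring
        rw [this]
        refine (Eav_const p hp n 1 (Function.update ω n a)).ge.trans ?_
        apply Eav_mono
        intro η hη
        have : η n = a := by rw [hη n le_rfl]; simp
        rw [NS_succ, this, if_pos ha, if_pos (by omega)]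
      · rw [if_neg ha, add_zero]
        refine (ih (Function.update ω n a)).trans ?_
        apply Eav_mono
        intro η hη
        have : η n = a := by rw [hη n le_rfl]; simp
        rw [NS_succ, this, if_neg ha, add_zero]
    have h2 := Finset.sum_le_sum key
    simp only [Eav]
    rw [le_div_iff₀ hpn]
    refine le_trans ?_ h2
    rw [Finset.sum_add_distrib, Finset.sum_const, Finset.card_range, nsmul_eq_mul,
      sum_ite_card_eq _ _ (hS n), cS_succ, ← hcdef]
    set t : ℝ := ((S n).card : ℝ) with ht
    have ht0 : 0 ≤ t := Nat.cast_nonneg _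
    have e : (p n : ℝ) * (c/(1+c)) + t * (1/(1+c)) = ((c + t / p n) / (1+c)) * p n := by
      field_simp
    rw [e]
    gcongr
    have : 0 ≤ t / p n := by positivity
    linarith

end CoveringAux

section CoveringMain
open Finset Function

/-- Rectangles in the configuration space. -/
def RectC (d ν mu : ℕ) (j : ℕ → ℕ) : Set (ℕ → ℕ) :=
  {η | η ν = j ν ∧ ∀ k, mu ≤ k → k < d → η k = j k}

open Classical in
/-- number of selected rectangles containing `η`. -/
noncomputable def NT {ι : Type*} (R : ι → Set (ℕ → ℕ)) (T : Finset ι) (η : ℕ → ℕ) : ℕ :=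
  (T.filter (fun i => η ∈ R i)).card

/-- admissible rectangles over the fibre of `ω` with free coordinates `< n`. -/
def Adm (p : ℕ → ℕ) (d n : ℕ) (ω : ℕ → ℕ) (B : Set (ℕ → ℕ)) : Prop :=
  ∃ ν mu j, ν < mu ∧ mu ≤ n ∧ (∀ k, j k < p k) ∧ (∀ k, n ≤ k → k < d → j k = ω k) ∧
    B = RectC d ν mu j

open Classical in
/-- conclusion of the selection procedure -/
def Good {ι : Type*} (p : ℕ → ℕ) (R : ι → Set (ℕ → ℕ)) (G : ℕ → ℝ) (K : ℝ) (n : ℕ) (ω : ℕ → ℕ)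
    (S : ℕ → Finset ℕ) (Θ : Set ι) : Prop :=
  ∃ T : Finset ι, (∀ i ∈ T, i ∈ Θ) ∧
      Eav p n (fun η => if 0 < NS S n η ∨ ∃ i ∈ Θ, η ∈ R i then (1:ℝ) else 0) ω ≤
        5 * Eav p n (fun η => if 0 < NS S n η ∨ ∃ i ∈ T, η ∈ R i then (1:ℝ) else 0) ω ∧
      Eav p n (fun η => G (NS S n η + NT R T η)) ω ≤ K

lemma ite_le_ite_of_imp (P Q : Prop) [Decidable P] [Decidable Q] (h : P → Q) :
    (if P then (1:ℝ) else 0) ≤ if Q then 1 else 0 := by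
  by_cases hP : P
  · rw [if_pos hP, if_pos (h hP)]
  · rw [if_neg hP]; split_ifs <;> norm_num

lemma NS_update (S : ℕ → Finset ℕ) (n ν b : ℕ) (hν : ν < n) (hb : b ∉ S ν) (η : ℕ → ℕ) :
    NS (Function.update S ν (insert b (S ν))) n η = NS S n η + if η ν = b then 1 else 0 := by
  unfold NS
  simp only [Finset.card_filter]
  have hm := Finset.mem_range.2 hν
  rw [← Finset.add_sum_erase _ _ hm, ← Finset.add_sum_erase _ _ hm]
  have : ∀ x ∈ (Finset.range n).erase ν,
      (if η x ∈ Function.update S ν (insert b (S ν)) x then 1 else 0) =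
      if η x ∈ S x then 1 else 0 := by
    intro x hx
    rw [Function.update_of_ne (Finset.ne_of_mem_erase hx)]
  rw [Finset.sum_congr rfl this]
  simp only [Function.update_self, Finset.mem_insert]
  by_cases h1 : η ν = b
  · rw [if_pos (Or.inl h1), if_pos h1, if_neg (by rw [h1]; exact hb)]; omega
  · simp [h1]

lemma slab_step {ι : Type*} (p : ℕ → ℕ) (hp : ∀ k, 0 < p k) (d : ℕ) (R : ι → Set (ℕ → ℕ))
    (G : ℕ → ℝ) (hG : Monotone G) (K : ℝ)
    (hK : ∀ (n : ℕ) (S : ℕ → Finset ℕ) (ω : ℕ → ℕ), cS p S n ≤ 1/4 →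
      Eav p n (fun η => G (NS S n η + 1)) ω ≤ K)
    (n : ℕ) (ω : ℕ → ℕ) (S : ℕ → Finset ℕ) (hS : ∀ k, S k ⊆ Finset.range (p k))
    (hc : cS p S n ≤ 1/4) (Θ : Set ι) (i : ι) (hi : i ∈ Θ) (ν : ℕ) (j : ℕ → ℕ)
    (hν : ν < n) (hj : ∀ k, j k < p k) (hjω : ∀ k, n ≤ k → k < d → j k = ω k)
    (hR : R i = RectC d ν n j) (hjS : j ν ∉ S ν)
    (hgood : cS p (Function.update S ν (insert (j ν) (S ν))) n ≤ 1/4 →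
      Good p R G K n ω (Function.update S ν (insert (j ν) (S ν))) Θ) :
    Good p R G K n ω S Θ := by
  classical
  set S' := Function.update S ν (insert (j ν) (S ν)) with hS'
  have hS'sub : ∀ k, S' k ⊆ Finset.range (p k) := by
    intro k
    by_cases hk : k = ν
    · subst hk
      rw [hS', Function.update_self]
      exact Finset.insert_subset (Finset.mem_range.2 (hj k)) (hS k)
    · rw [hS', Function.update_of_ne hk]; exact hS k
  have hNS : ∀ η, NS S' n η = NS S n η + if η ν = j ν then 1 else 0 :=
    NS_update S n ν (j ν) hν hjS
  have hmem : ∀ η : ℕ → ℕ, (∀ k, n ≤ k → η k = ω k) → (η ∈ R i ↔ η ν = j ν) := by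
    intro η hη
    rw [hR]
    constructor
    · exact fun h => h.1
    · exact fun h => ⟨h, fun k h1 h2 => by rw [hη k h1, hjω k h1 h2]⟩
  by_cases hfull : cS p S' n ≤ 1/4
  · obtain ⟨T, hT, h1, h2⟩ := hgood hfull
    refine ⟨insert i T, ?_, ?_, ?_⟩
    · intro x hx
      rcases Finset.mem_insert.1 hx with rfl | hx
      · exact hi
      · exact hT x hx
    · refine le_trans ?_ (h1.trans ?_)
      · apply Eav_mono
        intro η hη
        apply ite_le_ite_of_imp
        rintro (h | h)
        · left; rw [hNS]; omega
        · exact Or.inr h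
      · gcongr
        apply Eav_mono
        intro η hη
        apply ite_le_ite_of_imp
        rintro (h | ⟨x, hx, h⟩)
        · rw [hNS] at h
          by_cases h' : η ν = j ν
          · exact Or.inr ⟨i, Finset.mem_insert_self _ _, (hmem η hη).2 h'⟩
          · left; simpa [h'] using h
        · exact Or.inr ⟨x, Finset.mem_insert_of_mem hx, h⟩
    · refine le_trans ?_ h2
      apply Eav_mono
      intro η hη
      apply hG
      rw [hNS, add_assoc]
      gcongr
      unfold NT
      rw [Finset.filter_insert]
      by_cases h' : η ν = j ν
      · rw [if_pos ((hmem η hη).2 h'), if_pos h', add_comm]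
        exact Finset.card_insert_le _ _
      · rw [if_neg (fun h => h' ((hmem η hη).1 h))]
        exact Nat.le_add_left _ _
  · refine ⟨{i}, by simpa using hi, ?_, ?_⟩
    · have h1 : Eav p n (fun η => if 0 < NS S n η ∨ ∃ i ∈ Θ, η ∈ R i then (1:ℝ) else 0) ω ≤ 1 := by
        refine le_trans ?_ (Eav_const p hp n 1 ω).le
        apply Eav_mono
        intro η _
        split_ifs <;> norm_num
      have h2 := Eav_cover p hp S' hS'sub n ω
      have h3 : (1/5 : ℝ) ≤ cS p S' n / (1 + cS p S' n) := by
        push Not at hfull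
        rw [le_div_iff₀ (by linarith)]
        linarith
      have h4 : Eav p n (fun η => if 0 < NS S' n η then (1:ℝ) else 0) ω ≤
          Eav p n (fun η => if 0 < NS S n η ∨ ∃ x ∈ ({i} : Finset ι), η ∈ R x then (1:ℝ) else 0) ω := by
        apply Eav_mono
        intro η hη
        apply ite_le_ite_of_imp
        intro h
        rw [hNS] at h
        by_cases h' : η ν = j ν
        · exact Or.inr ⟨i, Finset.mem_singleton_self _, (hmem η hη).2 h'⟩
        · left; simpa [h'] using h
      linarith
    · refine le_trans ?_ (hK n S ω hc)
      apply Eav_mono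
      intro η _
      apply hG
      gcongr
      unfold NT
      exact (Finset.card_filter_le _ _).trans (by simp)

lemma fibre_step {ι : Type*} (p : ℕ → ℕ) (hp : ∀ k, 0 < p k) (d : ℕ) (R : ι → Set (ℕ → ℕ))
    (G : ℕ → ℝ) (hG : Monotone G) (K : ℝ)
    (hK : ∀ (n : ℕ) (S : ℕ → Finset ℕ) (ω : ℕ → ℕ), cS p S n ≤ 1/4 →
      Eav p n (fun η => G (NS S n η + 1)) ω ≤ K)
    (n : ℕ) (hn : n + 1 ≤ d) (ω : ℕ → ℕ) (S : ℕ → Finset ℕ)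
    (hc : cS p S (n+1) ≤ 1/4) (Θ : Set ι) (hΘ : ∀ i ∈ Θ, Adm p d (n+1) ω (R i))
    (hno : ∀ i ∈ Θ, ∀ ν j, ν < n + 1 → (∀ k, j k < p k) →
        (∀ k, n + 1 ≤ k → k < d → j k = ω k) → R i = RectC d ν (n+1) j → j ν ∈ S ν)
    (ih : ∀ (ω : ℕ → ℕ) (Θ : Set ι), cS p S n ≤ 1/4 → (∀ i ∈ Θ, Adm p d n ω (R i)) →
      Good p R G K n ω S Θ) :
    Good p R G K (n+1) ω S Θ := by
  classical
  have hpn : (0 : ℝ) < p n := by exact_mod_cast hp n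
  have hcn : cS p S n ≤ 1/4 := by
    rw [cS_succ] at hc
    have : 0 ≤ ((S n).card : ℝ) / p n := by positivity
    linarith
  let Θa : ℕ → Set ι := fun a => {i | i ∈ Θ ∧ Adm p d n (Function.update ω n a) (R i)}
  have hsub : ∀ a i, i ∈ Θa a → ∀ η ∈ R i, η n = a := by
    rintro a i ⟨_, ν, mu, j, h1, h2, h3, h4, h5⟩ η hη
    rw [h5] at hη
    rw [hη.2 n h2 (by omega), h4 n le_rfl (by omega)]
    simp
  have key : ∀ a, ∃ T : Finset ι, (∀ i ∈ T, i ∈ Θa a) ∧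
      Eav p n (fun η => if 0 < NS S (n+1) η ∨ ∃ i ∈ Θ, η ∈ R i then (1:ℝ) else 0)
        (Function.update ω n a) ≤
      5 * Eav p n (fun η => if 0 < NS S (n+1) η ∨ ∃ i ∈ T, η ∈ R i then (1:ℝ) else 0)
        (Function.update ω n a) ∧
      Eav p n (fun η => G (NS S (n+1) η + NT R T η)) (Function.update ω n a) ≤ K := by
    intro a
    by_cases ha : a ∈ S n
    · refine ⟨∅, by simp, ?_, ?_⟩
      · have h1 : Eav p n (fun η => if 0 < NS S (n+1) η ∨ ∃ i ∈ Θ, η ∈ R i then (1:ℝ) else 0)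
            (Function.update ω n a) ≤ 1 := by
          refine le_trans ?_ (Eav_const p hp n 1 (Function.update ω n a)).le
          apply Eav_mono
          intro η _
          split_ifs <;> norm_num
        have h2 : 1 ≤ Eav p n (fun η => if 0 < NS S (n+1) η ∨ ∃ i ∈ (∅ : Finset ι), η ∈ R i
            then (1:ℝ) else 0) (Function.update ω n a) := by
          refine le_trans (Eav_const p hp n 1 (Function.update ω n a)).ge ?_
          apply Eav_mono
          intro η hη
          have : η n = a := by rw [hη n le_rfl]; simp
          rw [if_pos]
          left
          rw [NS_succ, this, if_pos ha]; omega
        linarith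
      · refine le_trans ?_ (hK n S (Function.update ω n a) hcn)
        apply Eav_mono
        intro η hη
        have : η n = a := by rw [hη n le_rfl]; simp
        apply hG
        rw [NS_succ, this, if_pos ha]
        simp [NT]
    · obtain ⟨T, hT, h1, h2⟩ := ih (Function.update ω n a) (Θa a) hcn (fun i hi => hi.2)
      have hNS : ∀ η : ℕ → ℕ, (∀ k, n ≤ k → η k = Function.update ω n a k) →
          NS S (n+1) η = NS S n η := by
        intro η hη
        have : η n = a := by rw [hη n le_rfl]; simp
        rw [NS_succ, this, if_neg ha, add_zero]
      refine ⟨T, hT, ?_, ?_⟩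
      · refine le_trans ?_ (h1.trans ?_)
        · apply Eav_mono
          intro η hη
          apply ite_le_ite_of_imp
          rw [hNS η hη]
          rintro (h | ⟨i, hi, h⟩)
          · exact Or.inl h
          · obtain ⟨ν, mu, j, g1, g2, g3, g4, g5⟩ := hΘ i hi
            rcases Nat.lt_or_ge n mu with hmu | hmu
            · have hmu' : mu = n + 1 := by omega
              subst hmu'
              left
              have hjS := hno i hi ν j g1 g3 g4 g5
              rw [g5] at h
              have e : η ν = j ν := h.1
              rw [← hNS η hη]
              unfold NS
              apply Finset.card_pos.2
              exact ⟨ν, Finset.mem_filter.2 ⟨Finset.mem_range.2 g1, by rw [e]; exact hjS⟩⟩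
            · right
              refine ⟨i, ⟨hi, ν, mu, j, g1, hmu, g3, ?_, g5⟩, h⟩
              intro k hk hkd
              rw [g5] at h
              rw [← h.2 k (by omega) hkd, hη k hk]
        · gcongr
          apply Eav_mono
          intro η hη
          rw [hNS η hη]
      · refine le_trans ?_ h2
        apply Eav_mono
        intro η hη
        rw [hNS η hη]
  choose T hT h1 h2 using key
  have hmemT : ∀ a ∈ Finset.range (p n), ∀ η : ℕ → ℕ,
      (∀ k, n ≤ k → η k = Function.update ω n a k) → ∀ i,
      (i ∈ (Finset.range (p n)).biUnion T ∧ η ∈ R i ↔ i ∈ T a ∧ η ∈ R i) := by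
    intro a ha η hη i
    have : η n = a := by rw [hη n le_rfl]; simp
    constructor
    · rintro ⟨h, h'⟩
      obtain ⟨b, hb, hib⟩ := Finset.mem_biUnion.1 h
      have := hsub b i (hT b i hib) η h'
      have hab : a = b := by omega
      subst hab
      exact ⟨hib, h'⟩
    · rintro ⟨h, h'⟩
      exact ⟨Finset.mem_biUnion.2 ⟨a, ha, h⟩, h'⟩
  refine ⟨(Finset.range (p n)).biUnion T, ?_, ?_, ?_⟩
  · intro i hi
    obtain ⟨b, hb, hib⟩ := Finset.mem_biUnion.1 hi
    exact (hT b i hib).1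
  · simp only [Eav]
    rw [← mul_div_assoc, Finset.mul_sum]
    gcongr with a ha
    refine (h1 a).trans ?_
    gcongr
    apply Eav_mono
    intro η hη
    apply ite_le_ite_of_imp
    rintro (h | ⟨i, hi⟩)
    · exact Or.inl h
    · exact Or.inr ⟨i, (hmemT a ha η hη i).2 hi⟩
  · simp only [Eav]
    rw [div_le_iff₀ hpn]
    have : ∀ a ∈ Finset.range (p n),
        Eav p n (fun η => G (NS S (n+1) η + NT R ((Finset.range (p n)).biUnion T) η))
          (Function.update ω n a) ≤ K := by
      intro a ha
      refine le_trans ?_ (h2 a)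
      apply Eav_mono
      intro η hη
      apply hG
      gcongr
      unfold NT
      apply Finset.card_le_card
      intro i hi
      rw [Finset.mem_filter] at hi ⊢
      exact (hmemT a ha η hη i).1 hi
    refine (Finset.sum_le_sum this).trans ?_
    simp [mul_comm]

lemma selection {ι : Type*} (p : ℕ → ℕ) (hp : ∀ k, 0 < p k) (d : ℕ) (R : ι → Set (ℕ → ℕ))
    (G : ℕ → ℝ) (hG : Monotone G) (K : ℝ)
    (hK : ∀ (n : ℕ) (S : ℕ → Finset ℕ) (ω : ℕ → ℕ), cS p S n ≤ 1/4 →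
      Eav p n (fun η => G (NS S n η + 1)) ω ≤ K)
    (n : ℕ) (hn : n ≤ d) (ω : ℕ → ℕ) (S : ℕ → Finset ℕ) (hS : ∀ k, S k ⊆ Finset.range (p k))
    (hc : cS p S n ≤ 1/4) (Θ : Set ι) (hΘ : ∀ i ∈ Θ, Adm p d n ω (R i)) :
    Good p R G K n ω S Θ := by
  classical
  induction n generalizing ω S Θ with
  | zero =>
    refine ⟨∅, by simp, ?_, ?_⟩
    · have h2 : ¬ (0 < NS S 0 ω ∨ ∃ i ∈ Θ, ω ∈ R i) := by
        rintro (h | ⟨i, hi, h⟩)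
        · simp [NS] at h
        · obtain ⟨ν, mu, j, h1, h2, _⟩ := hΘ i hi
          omega
      simp only [Eav]
      rw [if_neg h2]
      positivity
    · refine le_trans ?_ (hK 0 S ω hc)
      simp only [Eav]
      apply hG
      simp [NT]
  | succ n ih =>
    obtain ⟨k, hk⟩ : ∃ k, ∑ ν ∈ Finset.range (n+1), p ν <
        ∑ ν ∈ Finset.range (n+1), (S ν).card + k :=
      ⟨∑ ν ∈ Finset.range (n+1), p ν + 1, by omega⟩
    induction k generalizing S with
    | zero =>
      exfalso
      have : ∑ ν ∈ Finset.range (n+1), (S ν).card ≤ ∑ ν ∈ Finset.range (n+1), p ν :=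
        Finset.sum_le_sum (fun ν _ => by simpa using Finset.card_le_card (hS ν))
      omega
    | succ k ihk =>
      by_cases hslab : ∃ i ∈ Θ, ∃ ν j, ν < n + 1 ∧ (∀ k, j k < p k) ∧
        (∀ k, n + 1 ≤ k → k < d → j k = ω k) ∧ R i = RectC d ν (n+1) j ∧ j ν ∉ S ν
      · obtain ⟨i, hi, ν, j, g1, g2, g3, g4, g5⟩ := hslab
        refine slab_step p hp d R G hG K hK (n+1) ω S hS hc Θ i hi ν j g1 g2 g3 g4 g5 ?_
        intro hc'
        refine ihk _ ?_ hc' ?_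
        · intro k
          by_cases hk : k = ν
          · subst hk
            rw [Function.update_self]
            exact Finset.insert_subset (Finset.mem_range.2 (g2 k)) (hS k)
          · rw [Function.update_of_ne hk]; exact hS k
        · have hm := Finset.mem_range.2 g1
          rw [← Finset.add_sum_erase (Finset.range (n+1)) (fun x => (S x).card) hm] at hk
          rw [← Finset.add_sum_erase (Finset.range (n+1))
            (fun x => (Function.update S ν (insert (j ν) (S ν)) x).card) hm]
          have : ∀ x ∈ (Finset.range (n+1)).erase ν,
              (Function.update S ν (insert (j ν) (S ν)) x).card = (S x).card := by
            intro x hx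
            rw [Function.update_of_ne (Finset.ne_of_mem_erase hx)]
          rw [Finset.sum_congr rfl this]
          simp only [Function.update_self]
          rw [Finset.card_insert_of_notMem g5]
          omega
      · push Not at hslab
        refine fibre_step p hp d R G hG K hK n hn ω S hc Θ hΘ ?_ ?_
        · intro i hi ν j g1 g2 g3 g4
          exact hslab i hi ν j g1 g2 g3 g4
        · intro ω' Θ' hc' hΘ'
          exact ih (by omega) ω' S hS hc' Θ' hΘ'

end CoveringMain

section CoveringTorus
open Function

/-- representative in `[0,1)` -/
noncomputable def repC (y : Circle1) : ℝ := (AddCircle.equivIco (1:ℝ) 0 y : ℝ)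

lemma repC_mem (y : Circle1) : repC y ∈ Set.Ico (0:ℝ) 1 := by
  have := (AddCircle.equivIco (1:ℝ) 0 y).2
  simpa [repC] using this

lemma repC_coe (y : Circle1) : ((repC y : ℝ) : Circle1) = y :=
  AddCircle.coe_equivIco (p := (1:ℝ)) (a := 0) (y := y)

lemma measurable_repC : Measurable repC :=
  measurable_subtype_coe.comp (AddCircle.measurableEquivIco (1:ℝ) 0).measurable

lemma repC_of_mem (r : ℝ) (hr : r ∈ Set.Ico (0:ℝ) 1) : repC (r : Circle1) = r := by
  have h1 := repC_mem (r : Circle1)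
  have h2 := repC_coe (r : Circle1)
  refine (AddCircle.coe_eq_coe_iff_of_mem_Ico (p := (1:ℝ)) (a := 0) ?_ ?_).1 h2
  · simpa using h1
  · simpa using hr

lemma arc_sub (p a : ℕ) (ha : a < p) :
    Set.Ico ((a:ℝ) / p) (((a:ℝ)+1) / p) ⊆ Set.Ico (0:ℝ) 1 := by
  have hp : (0:ℝ) < p := by exact_mod_cast (by omega : 0 < p)
  apply Set.Ico_subset_Ico
  · positivity
  · rw [div_le_one hp]; exact_mod_cast ha

lemma mem_arc (p a : ℕ) (ha : a < p) (y : Circle1) :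
    y ∈ circleIco ((a:ℝ) / p) (((a:ℝ)+1) / p) ↔
      repC y ∈ Set.Ico ((a:ℝ) / p) (((a:ℝ)+1) / p) := by
  constructor
  · rintro ⟨r, hr, rfl⟩
    rw [repC_of_mem r (arc_sub p a ha hr)]
    exact hr
  · intro h
    exact ⟨_, h, repC_coe y⟩

/-- the digit of `y` -/
noncomputable def digC (p : ℕ) (y : Circle1) : ℕ := ⌊repC y * p⌋₊

lemma mem_arc_digC (p a : ℕ) (ha : a < p) (y : Circle1) :
    y ∈ circleIco ((a:ℝ) / p) (((a:ℝ)+1) / p) ↔ digC p y = a := by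
  have hp : (0:ℝ) < p := by exact_mod_cast (by omega : 0 < p)
  rw [mem_arc p a ha, digC, Nat.floor_eq_iff (mul_nonneg (repC_mem y).1 hp.le), Set.mem_Ico,
    div_le_iff₀ hp, lt_div_iff₀ hp]

lemma digC_lt (p : ℕ) (hp : 0 < p) (y : Circle1) : digC p y < p := by
  have hp' : (0:ℝ) < p := by exact_mod_cast hp
  rw [digC, Nat.floor_lt (mul_nonneg (repC_mem y).1 hp'.le)]
  have := (repC_mem y).2
  nlinarith

lemma measurable_arc (p a : ℕ) (ha : a < p) :
    MeasurableSet (circleIco ((a:ℝ) / p) (((a:ℝ)+1) / p)) := by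
  have : circleIco ((a:ℝ) / p) (((a:ℝ)+1) / p) =
      repC ⁻¹' (Set.Ico ((a:ℝ) / p) (((a:ℝ)+1) / p)) := by
    ext y; exact mem_arc p a ha y
  rw [this]
  exact measurable_repC measurableSet_Ico

lemma volume_arc (p a : ℕ) (ha : a < p) :
    volume (circleIco ((a:ℝ) / p) (((a:ℝ)+1) / p)) = ENNReal.ofReal (1 / p) := by
  rw [← (UnitAddCircle.measurePreserving_mk 0).measure_preimage
    (measurable_arc p a ha).nullMeasurableSet,
    Measure.restrict_congr_set (Ico_ae_eq_Ioc (a := (0:ℝ)) (b := 0 + 1)).symm,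
    Measure.restrict_apply' measurableSet_Ico]
  have : (fun x : ℝ => (x : AddCircle (1:ℝ))) ⁻¹' circleIco ((a:ℝ) / p) (((a:ℝ)+1) / p) ∩
      Set.Ico (0:ℝ) (0+1) = Set.Ico ((a:ℝ) / p) (((a:ℝ)+1) / p) := by
    ext r
    rw [zero_add]
    constructor
    · rintro ⟨h1, h2⟩
      have := (mem_arc p a ha _).1 h1
      rwa [repC_of_mem r h2] at this
    · intro h
      exact ⟨⟨r, h, rfl⟩, arc_sub p a ha h⟩
  refine (congrArg volume this).trans ?_
  rw [Real.volume_Ico]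
  congr 1
  ring

/-- digit map of the torus -/
noncomputable def digT (p : ℕ → ℕ) (x : Tinf) : ℕ → ℕ := fun k => digC (p k) (x k)

/-- tail cylinder -/
def cylT (p : ℕ → ℕ) (n d : ℕ) (ω : ℕ → ℕ) : Set Tinf :=
  {x | ∀ k ∈ Finset.Ico n d, digT p x k = ω k}

lemma cylT_eq (p : ℕ → ℕ) (n d : ℕ) (ω : ℕ → ℕ) (hω : ∀ k, ω k < p k) :
    cylT p n d ω = {x | ∀ k ∈ Finset.Ico n d,
      x k ∈ circleIco ((ω k:ℝ) / p k) (((ω k:ℝ)+1) / p k)} := by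
  ext x
  simp only [cylT, Set.mem_ofPred_eq, digT]
  exact forall₂_congr fun k _ => (mem_arc_digC (p k) (ω k) (hω k) (x k)).symm

lemma measurable_cylT (p : ℕ → ℕ) (n d : ℕ) (ω : ℕ → ℕ) (hω : ∀ k, ω k < p k) :
    MeasurableSet (cylT p n d ω) := by
  rw [cylT_eq p n d ω hω]
  have : {x : Tinf | ∀ k ∈ Finset.Ico n d,
      x k ∈ circleIco ((ω k:ℝ) / p k) (((ω k:ℝ)+1) / p k)} =
      ⋂ k ∈ Finset.Ico n d, (fun x : Tinf => x k) ⁻¹'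
        (circleIco ((ω k:ℝ) / p k) (((ω k:ℝ)+1) / p k)) := by
    ext x; simp
  rw [this]
  exact Finset.measurableSet_biInter _ fun k _ =>
    measurable_pi_apply k (measurable_arc _ _ (hω k))

lemma link (p : ℕ → ℕ) (μ : Measure Tinf) (hμ : IsProductLebesgue μ) (d : ℕ)
    (f : (ℕ → ℕ) → ℝ) (hf : ∀ η η' : ℕ → ℕ, (∀ k < d, η k = η' k) → f η = f η')
    (n : ℕ) (hn : n ≤ d) (ω : ℕ → ℕ) (hω : ∀ k, ω k < p k) :
    IntegrableOn (fun x => f (digT p x)) (cylT p n d ω) μ ∧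
    ∫ x in cylT p n d ω, f (digT p x) ∂μ = (∏ k ∈ Finset.Ico n d, (1 / (p k : ℝ))) * Eav p n f ω := by
  have := hμ.1
  induction n generalizing ω with
  | zero =>
    have hcon : ∀ x ∈ cylT p 0 d ω, f (digT p x) = f ω := fun x hx =>
      hf _ _ fun k hk => hx k (by simpa using hk)
    have hm := measurable_cylT p 0 d ω hω
    refine ⟨(integrableOn_congr_fun hcon hm).2 (integrable_const _), ?_⟩
    rw [setIntegral_congr_fun hm hcon, setIntegral_const, Eav, smul_eq_mul]
    congr 1
    have h := hμ.2 (Finset.Ico 0 d) (fun k => circleIco ((ω k:ℝ) / p k) (((ω k:ℝ)+1) / p k))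
      (fun k => measurable_arc _ _ (hω k))
    rw [measureReal_def, cylT_eq p 0 d ω hω, h, ENNReal.toReal_prod]
    refine Finset.prod_congr rfl fun k _ => ?_
    rw [volume_arc _ _ (hω k), ENNReal.toReal_ofReal (by positivity)]
  | succ n ih =>
    have hpn : 0 < p n := (Nat.zero_le _).trans_lt (hω n)
    have hU : cylT p (n+1) d ω = ⋃ a ∈ Finset.range (p n), cylT p n d (Function.update ω n a) := by
      ext x
      simp only [Set.mem_iUnion, Finset.mem_range, exists_prop]
      constructor
      · intro hx
        refine ⟨digT p x n, digC_lt _ hpn _, ?_⟩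
        intro k hk
        rw [Finset.mem_Ico] at hk
        by_cases h : k = n
        · subst h; simp
        · rw [Function.update_of_ne h]
          exact hx k (Finset.mem_Ico.2 ⟨by omega, hk.2⟩)
      · rintro ⟨a, _, hx⟩ k hk
        rw [Finset.mem_Ico] at hk
        rw [hx k (Finset.mem_Ico.2 ⟨by omega, hk.2⟩), Function.update_of_ne (by omega)]
    have hω' : ∀ a ∈ Finset.range (p n), ∀ k, Function.update ω n a k < p k := by
      intro a ha k
      by_cases h : k = n
      · subst h; simpa using ha
      · rw [Function.update_of_ne h]; exact hω k
    have hI := fun a ha => ih (by omega) (Function.update ω n a) (hω' a ha)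
    rw [hU]
    refine ⟨integrableOn_finset_iUnion.2 fun a ha => (hI a ha).1, ?_⟩
    rw [integral_biUnion_finset _ (fun a ha => measurable_cylT p n d _ (hω' a ha)) ?_
      (fun a ha => (hI a ha).1), Finset.sum_congr rfl fun a ha => (hI a ha).2, ← Finset.mul_sum,
      Finset.prod_eq_prod_Ico_succ_bot (by omega : n < d), Eav]
    · ring
    · intro a _ b _ hab
      rw [Function.onFun, Set.disjoint_left]
      intro x hx hx'
      have h1 := hx n (Finset.mem_Ico.2 ⟨le_rfl, by omega⟩)
      have h2 := hx' n (Finset.mem_Ico.2 ⟨le_rfl, by omega⟩)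
      rw [h1] at h2
      simp at h2
      exact hab h2

lemma link_full (p : ℕ → ℕ) (hp : ∀ k, 0 < p k) (μ : Measure Tinf) (hμ : IsProductLebesgue μ)
    (d : ℕ) (f : (ℕ → ℕ) → ℝ) (hf : ∀ η η' : ℕ → ℕ, (∀ k < d, η k = η' k) → f η = f η') :
    Integrable (fun x => f (digT p x)) μ ∧ ∫ x, f (digT p x) ∂μ = Eav p d f (fun _ => 0) := by
  have h := link p μ hμ d f hf d le_rfl (fun _ => 0) hp
  have hu : cylT p d d (fun _ => 0) = Set.univ := by ext; simp [cylT]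
  rw [hu] at h
  simpa using h

open Classical in
lemma link_measure (p : ℕ → ℕ) (hp : ∀ k, 0 < p k) (μ : Measure Tinf) (hμ : IsProductLebesgue μ)
    (d : ℕ) (P : (ℕ → ℕ) → Prop) (hf : ∀ η η' : ℕ → ℕ, (∀ k < d, η k = η' k) → (P η ↔ P η')) :
    μ {x | P (digT p x)} = ENNReal.ofReal (Eav p d (fun η => if P η then (1:ℝ) else 0) (fun _ => 0)) := by
  have := hμ.1
  obtain ⟨h1, h2⟩ := link_full p hp μ hμ d (fun η => if P η then (1:ℝ) else 0)
    (fun η η' h => by simp only [hf η η' h])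
  rw [← h2]
  have hind : (fun x : Tinf => if P (digT p x) then (1:ℝ) else 0) =
      {x | P (digT p x)}.indicator (fun _ => (1:ℝ)) := by
    ext x; simp [Set.indicator_apply]
  have hnm : NullMeasurableSet {x | P (digT p x)} μ := by
    have := h1.aemeasurable.nullMeasurable (measurableSet_singleton (1:ℝ))
    convert this using 1
    ext x
    by_cases h : P (digT p x) <;> simp [h]
  rw [hind, integral_indicator₀ hnm]
  simp

end CoveringTorus

section CoveringPsi

lemma alphaFn_bound (m : ℕ) (hm : 1 ≤ m) (t : ℝ) (ht0 : 0 ≤ t) (ht : t ≤ m) :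
    ‖alphaFn t‖ ≤ (m : ℝ) ^ (m - 1) := by
  have hm' : (1:ℝ) ≤ m := by exact_mod_cast hm
  unfold alphaFn
  split_ifs with h
  · rw [Real.norm_of_nonneg (by positivity)]
    calc t ^ (t - 1) ≤ (m:ℝ) ^ (t - 1) := Real.rpow_le_rpow ht0 ht (by linarith)
      _ ≤ (m:ℝ) ^ ((m:ℝ) - 1) := Real.rpow_le_rpow_of_exponent_le hm' (by linarith)
      _ = (m:ℝ) ^ (m - 1) := by
        rw [← Real.rpow_natCast]; congr 1; push_cast [hm]; rfl
  · rw [Real.norm_of_nonneg ht0]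
    exact (not_lt.1 h).trans (one_le_pow₀ hm')

lemma pow_le_fact (k : ℕ) : (k / 3 + 1) ^ (k / 3 + 1) ≤ 4 * k.factorial := by
  have hk := Nat.factorial_pos k
  obtain ⟨q, hq⟩ : ∃ q, k / 3 = q := ⟨_, rfl⟩
  rw [hq]
  rcases Nat.lt_or_ge q 2 with h | h
  · interval_cases q
    · omega
    · omega
  · have h1 : (q+1 + 1) ^ (q+1) ≤ (q + 1 + (q + 1)).factorial := by
      have := Nat.factorial_mul_pow_le_factorial (m := q+1) (n := q+1)
      have h2 := Nat.factorial_pos (q+1)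
      nlinarith [Nat.zero_le ((q+1+1)^(q+1))]
    have h2 : (q+1+(q+1)).factorial ≤ k.factorial := Nat.factorial_le (by omega)
    have h3 : (q+1)^(q+1) ≤ (q+1+1)^(q+1) := Nat.pow_le_pow_left (by omega) _
    omega

lemma PsiFn_bound (k : ℕ) : PsiFn ((1/3) * (k:ℝ)) ≤ 4 * ((k-1).factorial : ℝ) := by
  cases k with
  | zero => simp [PsiFn]
  | succ k =>
    have h3 : (k:ℝ) + 1 ≤ 3 * ((k/3 + 1 : ℕ) : ℝ) := by
      exact_mod_cast (by omega : k + 1 ≤ 3 * (k/3+1))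
    set m := k / 3 + 1 with hm
    have hy : |(1/3) * ((k+1 : ℕ):ℝ)| ≤ m := by
      rw [abs_of_nonneg (by positivity)]; push_cast; linarith
    set y := |(1/3) * ((k+1 : ℕ):ℝ)| with hydef
    have hy0 : 0 ≤ y := abs_nonneg _
    have h := intervalIntegral.norm_integral_le_of_norm_le_const (a := 0) (b := y) (f := alphaFn)
      (C := (m:ℝ)^(m-1)) (by
        intro t ht
        rw [Set.uIoc_of_le hy0] at ht
        exact alphaFn_bound m (by omega) t ht.1.le (ht.2.trans hy))
    unfold PsiFn
    rw [← hydef]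
    refine (Real.le_norm_self _).trans (h.trans ?_)
    rw [sub_zero, abs_of_nonneg hy0]
    calc (m:ℝ)^(m-1) * y ≤ (m:ℝ)^(m-1) * m := by gcongr
      _ = (m:ℝ)^m := by rw [← pow_succ]; congr 1
      _ ≤ 4 * (k.factorial : ℝ) := by exact_mod_cast pow_le_fact k
      _ = _ := by simp

end CoveringPsi

/-- **Covering lemma for `𝓕_d` (Lemma 5).** There is an absolute constant `C > 0` such
that any collection `Θ` of rectangles from `𝓕_d` contains a finite subcollection
`Ã_1, …, Ã_m` with `λ(⋃ Θ) ≤ 5·λ(⋃ Ã_j)` and `∫ Ψ((1/3) ∑ 𝟙_{Ã_j}) dλ ≤ C`. -/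
theorem covering_lemma_Fd :
    ∃ C : ℝ, 0 < C ∧
      ∀ (d : ℕ), 1 ≤ d →
        ∀ (μ : Measure Tinf), IsProductLebesgue μ →
          ∀ Θ : Set (Set Tinf), Θ ⊆ Fd d →
            ∃ (m : ℕ) (Atil : Fin m → Set Tinf), Function.Injective Atil ∧
              (∀ i, Atil i ∈ Θ) ∧
              μ (⋃₀ Θ) ≤ 5 * μ (⋃ i, Atil i) ∧
              (∫ x, PsiFn ((1 / 3) * ∑ i, (Atil i).indicator (fun _ => (1:ℝ)) x) ∂μ) ≤ C := by
  classical
  refine ⟨8, by norm_num, ?_⟩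
  intro d _ μ hμ Θ hΘ
  have hp : ∀ k, 0 < nthPrime k := fun k => (Nat.prime_nth_prime k).pos
  -- configuration rectangles
  have hex : ∀ A : Set Tinf, ∃ B : Set (ℕ → ℕ), A ∈ Θ →
      Adm nthPrime d d (fun _ => 0) B ∧ ∀ x, x ∈ A ↔ digT nthPrime x ∈ B := by
    intro A
    by_cases hA : A ∈ Θ
    · obtain ⟨ν, mu, h1, h2, j, hj, hAe⟩ := hΘ hA
      refine ⟨RectC d ν mu j, fun _ => ⟨⟨ν, mu, j, h1, h2, hj, fun k _ _ => by omega, rfl⟩, ?_⟩⟩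
      intro x
      rw [hAe]
      simp only [Set.mem_ofPred_eq, RectC, digT]
      constructor
      · intro h
        exact ⟨(mem_arc_digC _ _ (hj ν) _).1 (h ν (Or.inl rfl)),
          fun k hk hkd => (mem_arc_digC _ _ (hj k) _).1 (h k (Or.inr ⟨hk, hkd⟩))⟩
      · rintro ⟨g1, g2⟩ k (rfl | ⟨hk, hkd⟩)
        · exact (mem_arc_digC _ _ (hj k) _).2 g1
        · exact (mem_arc_digC _ _ (hj k) _).2 (g2 k hk hkd)
    · exact ⟨∅, fun h => absurd h hA⟩
  choose R hR using hex
  have hdep : ∀ A ∈ Θ, ∀ η η' : ℕ → ℕ, (∀ k < d, η k = η' k) → (η ∈ R A ↔ η' ∈ R A) := by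
    intro A hA η η' h
    obtain ⟨⟨ν, mu, j, h1, h2, _, _, hB⟩, _⟩ := hR A hA
    rw [hB]
    simp only [RectC, Set.mem_ofPred_eq]
    rw [h ν (by omega)]
    refine and_congr_right fun _ => forall_congr' fun k => forall_congr' fun _ =>
      forall_congr' fun hk => by rw [h k hk]
  let G : ℕ → ℝ := fun k => 4 * ((k-1).factorial : ℝ)
  have hG : Monotone G := by
    intro a b hab
    have : (a-1).factorial ≤ (b-1).factorial := Nat.factorial_le (by omega)
    have : ((a-1).factorial : ℝ) ≤ (b-1).factorial := by exact_mod_cast this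
    simp only [G]; linarith
  obtain ⟨T, hT, hcov, hint⟩ := selection nthPrime hp d R G hG 8 (by
      intro n S ω hc
      have := Eav_fact nthPrime hp S n ω hc
      simp only [G, Nat.add_sub_cancel]
      rw [Eav_smul]
      linarith) d le_rfl (fun _ => 0) (fun _ => ∅) (by simp) (by simp [cS]) Θ
      (fun A hA => (hR A hA).1)
  have hNS0 : ∀ η, NS (fun _ => ∅) d η = 0 := by intro η; simp [NS]
  simp only [hNS0, lt_irrefl, false_or, zero_add] at hcov hint
  refine ⟨T.card, fun i => (T.equivFin.symm i : Set Tinf),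
    Subtype.val_injective.comp T.equivFin.symm.injective, fun i => hT _ (T.equivFin.symm i).2, ?_, ?_⟩
  · have e1 : ⋃₀ Θ = {x | ∃ A ∈ Θ, digT nthPrime x ∈ R A} := by
      ext x
      simp only [Set.mem_sUnion, Set.mem_ofPred_eq]
      exact exists_congr fun A => and_congr_right fun hA => (hR A hA).2 x
    have e2 : (⋃ i, (T.equivFin.symm i : Set Tinf)) = {x | ∃ A ∈ T, digT nthPrime x ∈ R A} := by
      ext x
      simp only [Set.mem_iUnion, Set.mem_ofPred_eq]
      constructor
      · rintro ⟨i, hi⟩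
        exact ⟨_, (T.equivFin.symm i).2, ((hR _ (hT _ (T.equivFin.symm i).2)).2 x).1 hi⟩
      · rintro ⟨A, hA, hx⟩
        refine ⟨T.equivFin ⟨A, hA⟩, ?_⟩
        rw [Equiv.symm_apply_apply]
        exact ((hR A (hT A hA)).2 x).2 hx
    rw [e1, e2, link_measure nthPrime hp μ hμ d (fun η => ∃ A ∈ Θ, η ∈ R A),
      link_measure nthPrime hp μ hμ d (fun η => ∃ A ∈ T, η ∈ R A)]
    · have : (5 : ENNReal) = ENNReal.ofReal 5 := by simp
      rw [this, ← ENNReal.ofReal_mul (by norm_num)]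
      refine ENNReal.ofReal_le_ofReal ?_
      convert hcov
    · intro η η' h
      exact exists_congr fun A => and_congr_right fun hA => hdep A (hT A hA) η η' h
    · intro η η' h
      exact exists_congr fun A => and_congr_right fun hA => hdep A hA η η' h
  · have e : ∀ x, ∑ i, ((T.equivFin.symm i : Set Tinf)).indicator (fun _ => (1:ℝ)) x =
        (NT R T (digT nthPrime x) : ℝ) := by
      intro x
      rw [Equiv.sum_comp T.equivFin.symm
        (fun A : T => (A : Set Tinf).indicator (fun _ => (1:ℝ)) x),
        Finset.sum_coe_sort T (fun A => A.indicator (fun _ => (1:ℝ)) x), NT, Finset.card_filter]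
      push_cast
      refine Finset.sum_congr rfl fun A hA => ?_
      rw [Set.indicator_apply]
      simp only [(hR A (hT A hA)).2 x]
    simp only [e]
    rw [(link_full nthPrime hp μ hμ d (fun η => PsiFn ((1/3) * (NT R T η : ℝ))) ?_).2]
    · refine le_trans ?_ hint
      apply Eav_mono
      intro η _
      exact PsiFn_bound _
    · intro η η' h
      have : NT R T η = NT R T η' := by
        unfold NT
        congr 1
        refine Finset.filter_congr fun A hA => ?_
        exact hdep A (hT A hA) η η' h
      simp only [this]
end
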